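/- arXiv:math/0305411 — 2 statements merged into one kernel-verified Lean document; each statement's English description precedes it below -/
import Mathlib

section
/- For every symmetric convex body K ⊂ ℝ², every real p ≥ 1, and every integer N ≥ 2, one has 𝔼 U_{K, N+1}^p ≤ 𝔼 U_{𝒫, N+1}^p, where 𝒫 is a symmetric parallelogram (the image of [-1,1]² under an invertible linear map). -/
open MeasureTheory Set

noncomputable section

variable {E : Type*} [NormedAddCommGroup E] [InnerProductSpace ℝ E]

/-- A symmetric convex body: a compact convex set with nonempty interior with `K = -K`. -/
def IsSymConvexBody (K : Set E) : Prop :=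
  IsCompact K ∧ Convex ℝ K ∧ (interior K).Nonempty ∧ K = -K

/-- `momentU n N K p = 𝔼 U_{K,N}^p`, the `p`-th moment of the normalized volume of the
convex hull of `N` independent uniform random points in `K ⊆ ℝⁿ`. -/
def momentU (n N : ℕ) (K : Set (EuclideanSpace ℝ (Fin n))) (p : ℝ) : ℝ :=
  (∫ x : Fin N → EuclideanSpace ℝ (Fin n) in {x | ∀ i, x i ∈ K},
      ((volume (convexHull ℝ (Set.range x))).toReal / (volume K).toReal) ^ p) /
    (volume K).toReal ^ N

/-- `momentV n N K p = 𝔼 V_{K,N}^p`, the `p`-th moment of the normalized volume of the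
symmetric convex hull `conv{±x₁, …, ±x_N}` of `N` independent uniform random points
in `K ⊆ ℝⁿ`. -/
def momentV (n N : ℕ) (K : Set (EuclideanSpace ℝ (Fin n))) (p : ℝ) : ℝ :=
  (∫ x : Fin N → EuclideanSpace ℝ (Fin n) in {x | ∀ i, x i ∈ K},
      ((volume (convexHull ℝ (Set.range x ∪ -Set.range x))).toReal / (volume K).toReal) ^ p) /
    (volume K).toReal ^ N

/-!
Moving the points of a random polytope parallel to a fixed direction with prescribed velocities
makes the volume of their convex hull a convex function of time. Hence, if a body is moved by a
volume-preserving family of shears `(x, y) ↦ (x + t β(y), y)`, its normalized `p`-th moment is at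
most its maximum at the two ends of the motion.

For a symmetric polygon with a vertex `v` outside the parallelogram of its neighbours `w₁, w₂`,
choose coordinates in which `w₁ = (1, 1)` and `w₂ = (-1, 1)`, and shear the triangle `v w₁ w₂` and
its antipode parallel to their bases, fixing the rest. The polygon stays convex and symmetric
until `w₁` or `w₂` stops being a vertex, so both ends have fewer vertices. Induction on the number
of vertices reduces symmetric polygons to parallelograms, which are all affinely equivalent, and
general symmetric convex bodies are exhausted by symmetric polygons.
-/

namespace RandomPolytope

open scoped ENNReal Pointwise

/-! ### Moments of the measure of a random convex hull -/

section ConvexHullRange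

variable {ι V : Type*} [AddCommGroup V] [Module ℝ V]

theorem convexHull_range_eq_image_stdSimplex [Fintype ι] (x : ι → V) :
    convexHull ℝ (range x) = (fun w : ι → ℝ => ∑ i, w i • x i) '' stdSimplex ℝ ι := by
  classical
  have hrange : range x = Fintype.linearCombination ℝ x '' range fun i => Pi.single i (1 : ℝ) := by
    rw [← range_comp]
    exact congrArg range (funext fun i => by simp)
  rw [hrange, ← LinearMap.image_convexHull, convexHull_rangle_single_eq_stdSimplex]
  rfl

theorem isClosed_setOf_mem_convexHull_range [Finite ι] [TopologicalSpace V] [T2Space V]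
    [ContinuousAdd V] [ContinuousSMul ℝ V] :
    IsClosed {q : (ι → V) × V | q.2 ∈ convexHull ℝ (range q.1)} := by
  have := Fintype.ofFinite ι
  have hcomb : IsClosed {r : stdSimplex ℝ ι × ((ι → V) × V) |
      ∑ i, (r.1 : ι → ℝ) i • r.2.1 i = r.2.2} :=
    isClosed_eq (continuous_finsetSum _ fun i _ =>
      ((continuous_apply i).comp (continuous_subtype_val.comp continuous_fst)).smul
        ((continuous_apply i).comp (continuous_fst.comp continuous_snd))) (by fun_prop)
  convert isClosedMap_snd_of_compactSpace _ hcomb using 1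
  ext ⟨x, z⟩
  simp only [mem_ofPred_eq, convexHull_range_eq_image_stdSimplex, mem_image, Prod.exists,
    Subtype.exists, exists_eq_right]
  exact exists_congr fun w => (exists_prop (b := ∑ i, w i • x i = z)).symm

end ConvexHullRange

section Moments

section Moments

variable {ι V W : Type*} [Fintype ι]
  [NormedAddCommGroup V] [NormedSpace ℝ V] [MeasurableSpace V]
  [NormedAddCommGroup W] [NormedSpace ℝ W] [MeasurableSpace W]
  {μ : Measure V} {p : ℝ} {K : Set V}

/-- The unnormalized `p`-th moment of the `μ`-measure of the convex hull of points `x i`, `i : ι`,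
ranging independently over `K`. It takes values in `ℝ≥0∞`, so that no integrability is needed. -/
def hullMoment (μ : Measure V) (ι : Type*) [Fintype ι] (p : ℝ) (K : Set V) : ℝ≥0∞ :=
  ∫⁻ x in univ.pi fun _ : ι => K, μ (convexHull ℝ (range x)) ^ p ∂Measure.pi fun _ => μ

/-- The `p`-th moment of `μ (conv {x i | i : ι}) / μ K` for independent points `x i` uniformly
distributed in `K`. As `0 / 0 = 0`, it vanishes when `K` is a convex null set. -/
def normalizedHullMoment (μ : Measure V) (ι : Type*) [Fintype ι] (p : ℝ) (K : Set V) : ℝ≥0∞ :=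
  hullMoment μ ι p K / (μ K ^ Fintype.card ι * μ K ^ p)

theorem measurable_measure_convexHull_range {κ : Type*} [Finite κ] [FiniteDimensional ℝ V]
    [BorelSpace V] [SigmaFinite μ] : Measurable fun x : κ → V => μ (convexHull ℝ (range x)) :=
  measurable_measure_prodMk_left isClosed_setOf_mem_convexHull_range.measurableSet

theorem measure_convexHull_range_le {κ : Type*} (hK : Convex ℝ K) {x : κ → V}
    (hx : ∀ i, x i ∈ K) : μ (convexHull ℝ (range x)) ≤ μ K :=
  measure_mono <| convexHull_min (range_subset_iff.2 hx) hK

theorem hullMoment_le [SigmaFinite μ] (hK : Convex ℝ K) (hp : 0 ≤ p) :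
    hullMoment μ ι p K ≤ μ K ^ Fintype.card ι * μ K ^ p :=
  calc hullMoment μ ι p K
      ≤ ∫⁻ _ in univ.pi fun _ : ι => K, μ K ^ p ∂Measure.pi fun _ => μ :=
        setLIntegral_mono measurable_const fun _ hx =>
          ENNReal.rpow_le_rpow (measure_convexHull_range_le hK fun i => hx i (mem_univ i)) hp
    _ = μ K ^ Fintype.card ι * μ K ^ p := by
        rw [setLIntegral_const, Measure.pi_pi, Finset.prod_const, Finset.card_univ, mul_comm]

theorem normalizedHullMoment_le_one [SigmaFinite μ] (hK : Convex ℝ K) (hp : 0 ≤ p) :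
    normalizedHullMoment μ ι p K ≤ 1 :=
  ENNReal.div_le_of_le_mul <| by simpa using hullMoment_le hK hp

theorem normalizedHullMoment_of_measure_eq_zero [SigmaFinite μ] (hK : Convex ℝ K) (hp : 0 < p)
    (h : μ K = 0) : normalizedHullMoment μ ι p K = 0 := by
  have hzero : hullMoment μ ι p K = 0 := by
    simpa [h, hp] using hullMoment_le (μ := μ) (ι := ι) hK hp.le
  simp [normalizedHullMoment, hzero]

theorem hullMoment_eq_normalizedHullMoment_mul [SigmaFinite μ] (hK : Convex ℝ K) (hp : 0 < p)
    (hfin : μ K ≠ ∞) :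
    hullMoment μ ι p K = normalizedHullMoment μ ι p K * (μ K ^ Fintype.card ι * μ K ^ p) := by
  refine (ENNReal.div_mul_cancel' (fun h => ?_) fun h => ?_).symm
  · simpa [h] using hullMoment_le (μ := μ) (ι := ι) hK hp.le
  · exact absurd h (ENNReal.mul_ne_top (ENNReal.pow_ne_top hfin)
      (ENNReal.rpow_ne_top_of_nonneg hp.le hfin))

theorem hullMoment_image {α : Type*} [MeasurableSpace α] {κ : Measure α} [SigmaFinite κ]
    [SigmaFinite μ] (e : α ≃ᵐ V) (he : MeasurePreserving e κ μ) (s : Set α) :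
    hullMoment μ ι p (e '' s) =
      ∫⁻ x in univ.pi fun _ : ι => s, μ (convexHull ℝ (range (e ∘ x))) ^ p
        ∂Measure.pi fun _ => κ := by
  have hpi : MeasurePreserving (MeasurableEquiv.piCongrRight fun _ : ι => e)
      (Measure.pi fun _ => κ) (Measure.pi fun _ => μ) :=
    measurePreserving_pi _ _ fun _ => he
  have hpre : (MeasurableEquiv.piCongrRight fun _ : ι => e) ⁻¹' univ.pi (fun _ => e '' s) =
      univ.pi fun _ => s := by
    ext x
    simp [MeasurableEquiv.piCongrRight]
  rw [hullMoment, ← hpi.setLIntegral_comp_preimage_emb (MeasurableEquiv.measurableEmbedding _),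
    hpre]
  rfl

theorem normalizedHullMoment_map_image [BorelSpace V] [BorelSpace W] [SigmaFinite μ]
    (e : V ≃L[ℝ] W) :
    normalizedHullMoment (μ.map e) ι p (e '' K) = normalizedHullMoment μ ι p K := by
  let e' : V ≃ᵐ W := e.toHomeomorph.toMeasurableEquiv
  have hsigma : SigmaFinite (μ.map e') := e'.sigmaFinite_map
  have himage (s : Set V) : μ.map e (e '' s) = μ s :=
    (e'.map_apply _).trans (congrArg μ (e'.injective.preimage_image s))
  have hhull (x : ι → V) : convexHull ℝ (range (e ∘ x)) = e '' convexHull ℝ (range x) := by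
    rw [range_comp]
    exact (e.toLinearMap.image_convexHull _).symm
  have hmoment : hullMoment (μ.map e) ι p (e '' K) = hullMoment μ ι p K := by
    refine (hullMoment_image e' (e'.measurable.measurePreserving μ) K).trans ?_
    exact lintegral_congr fun x => congrArg (· ^ p) ((congrArg _ (hhull x)).trans (himage _))
  rw [normalizedHullMoment, hmoment, himage, normalizedHullMoment]

theorem measure_pi_const_smul {α : Type*} [MeasurableSpace α] (κ : Measure α) [SigmaFinite κ]
    (c : NNReal) :
    Measure.pi (fun _ : ι => c • κ) = c ^ Fintype.card ι • Measure.pi fun _ : ι => κ := by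
  refine Measure.pi_eq fun s _ => ?_
  simp only [Measure.smul_apply, Measure.pi_pi, ENNReal.smul_def, smul_eq_mul,
    Finset.prod_mul_distrib, Finset.prod_const, Finset.card_univ, ENNReal.coe_pow]

theorem normalizedHullMoment_smul_measure [FiniteDimensional ℝ V] [BorelSpace V] [SigmaFinite μ]
    {c : NNReal} (hc : c ≠ 0) (hp : 0 ≤ p) :
    normalizedHullMoment (c • μ) ι p K = normalizedHullMoment μ ι p K := by
  have hsmul (s : Set V) : (c • μ) s = c * μ s := rfl
  have hmoment : hullMoment (c • μ) ι p K =
      (c ^ Fintype.card ι * (c : ℝ≥0∞) ^ p) * hullMoment μ ι p K := by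
    simp only [hullMoment, measure_pi_const_smul, Measure.restrict_smul, lintegral_smul_measure,
      hsmul, ENNReal.mul_rpow_of_nonneg _ _ hp]
    rw [lintegral_const_mul _ (measurable_measure_convexHull_range.pow_const p),
      ENNReal.smul_def, smul_eq_mul, ENNReal.coe_pow, mul_assoc]
  have hc' : (c : ℝ≥0∞) ≠ 0 := ENNReal.coe_ne_zero.2 hc
  rw [normalizedHullMoment, hmoment, hsmul, mul_pow, ENNReal.mul_rpow_of_nonneg _ _ hp,
    mul_mul_mul_comm, ENNReal.mul_div_mul_left _ _ (by simp [hc'])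
      (ENNReal.mul_ne_top (by simp) (by simp [hc'])), normalizedHullMoment]

theorem normalizedHullMoment_image [FiniteDimensional ℝ V] [BorelSpace V] [BorelSpace W]
    (μ : Measure V) [μ.IsAddHaarMeasure] (ν : Measure W) [ν.IsAddHaarMeasure] (e : V ≃L[ℝ] W)
    (hp : 0 ≤ p) (K : Set V) :
    normalizedHullMoment ν ι p (e '' K) = normalizedHullMoment μ ι p K := by
  have hfin : FiniteDimensional ℝ W := e.toLinearEquiv.finiteDimensional
  have hhaar : (μ.map e).IsAddHaarMeasure := e.isAddHaarMeasure_map μ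
  have hfactor : (μ.map e).addHaarScalarFactor ν ≠ 0 :=
    (Measure.addHaarScalarFactor_pos_of_isAddHaarMeasure _ ν).ne'
  rw [← normalizedHullMoment_map_image e, Measure.isAddLeftInvariant_eq_smul (μ.map e) ν,
    normalizedHullMoment_smul_measure hfactor hp]

theorem normalizedHullMoment_le_of_monotone [SigmaFinite μ] (hp : 0 < p) {C : ℝ≥0∞}
    {A : ℕ → Set V} (hA : Monotone A) (hconv : ∀ j, Convex ℝ (A j)) (hAK : ∀ j, A j ⊆ K)
    (hnull : μ (K \ ⋃ j, A j) = 0) (hfin : μ K ≠ ∞)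
    (hC : ∀ j, normalizedHullMoment μ ι p (A j) ≤ C) : normalizedHullMoment μ ι p K ≤ C := by
  have hcover : (univ.pi fun _ : ι => K) ≤ᵐ[Measure.pi fun _ => μ]
      ⋃ j, univ.pi fun _ => A j := by
    have hmem : ∀ᵐ z ∂μ, z ∈ K → z ∈ ⋃ j, A j := by
      rw [ae_iff]
      simpa only [Classical.not_imp] using! hnull
    filter_upwards [ae_all_iff.2 fun i : ι =>
      (Measure.quasiMeasurePreserving_eval (fun _ : ι => μ) i).ae hmem] with x hx hxK
    choose j hj using fun i => mem_iUnion.1 (hx i (hxK i (mem_univ i)))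
    exact mem_iUnion.2
      ⟨Finset.univ.sup j, fun i _ => hA (Finset.le_sup (Finset.mem_univ i)) (hj i)⟩
  refine ENNReal.div_le_of_le_mul ?_
  calc hullMoment μ ι p K
      ≤ ∫⁻ x in ⋃ j, univ.pi fun _ : ι => A j, μ (convexHull ℝ (range x)) ^ p
          ∂Measure.pi fun _ => μ := lintegral_mono_set' hcover
    _ = ⨆ j, hullMoment μ ι p (A j) :=
        setLIntegral_iUnion_of_directed _ (Monotone.directed_le fun _ _ hij =>
          pi_mono fun _ _ => hA hij)
    _ ≤ C * (μ K ^ Fintype.card ι * μ K ^ p) := iSup_le fun j => by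
        rw [hullMoment_eq_normalizedHullMoment_mul (hconv j) hp
          (measure_ne_top_of_subset (hAK j) hfin)]
        gcongr
        exacts [hC j, hAK j, hAK j]

theorem momentU_eq_toReal_normalizedHullMoment (n N : ℕ) (K : Set (EuclideanSpace ℝ (Fin n)))
    (hp : 0 ≤ p) : momentU n N K p = (normalizedHullMoment volume (Fin N) p K).toReal := by
  have hpow (x : Fin N → EuclideanSpace ℝ (Fin n)) :
      ((volume (convexHull ℝ (range x))).toReal / (volume K).toReal) ^ p =
        (volume (convexHull ℝ (range x)) ^ p).toReal / (volume K ^ p).toReal := by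
    rw [Real.div_rpow ENNReal.toReal_nonneg ENNReal.toReal_nonneg, ENNReal.toReal_rpow,
      ENNReal.toReal_rpow]
  have hlt (x : Fin N → EuclideanSpace ℝ (Fin n)) :
      volume (convexHull ℝ (range x)) ^ p < ∞ :=
    ENNReal.rpow_lt_top_of_nonneg hp
      ((finite_range x).isCompact_convexHull ℝ).measure_lt_top.ne
  have hdomain : {x : Fin N → EuclideanSpace ℝ (Fin n) | ∀ i, x i ∈ K} =
      univ.pi fun _ => K := by
    ext x
    simp
  simp_rw [momentU, hpow, integral_div]
  rw [integral_toReal (measurable_measure_convexHull_range.pow_const p).aemeasurable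
    (.of_forall hlt), hdomain, normalizedHullMoment, ENNReal.toReal_div, ENNReal.toReal_mul,
    ENNReal.toReal_pow, Fintype.card_fin, div_div, mul_comm]
  rfl

end Moments

end Moments

/-! ### Shadow systems and shears -/

theorem volume_le_of_forall_exists_combination {A A₁ A₂ : Set ℝ} {a b : ℝ} (ha : 0 ≤ a)
    (hb : 0 ≤ b) (hc₁ : IsCompact A₁) (hc₂ : IsCompact A₂) (hconv₁ : Convex ℝ A₁)
    (hconv₂ : Convex ℝ A₂) (h : ∀ x ∈ A, ∃ y ∈ A₁, ∃ z ∈ A₂, x = a * y + b * z) :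
    volume A ≤ ENNReal.ofReal a * volume A₁ + ENNReal.ofReal b * volume A₂ := by
  rcases A.eq_empty_or_nonempty with rfl | ⟨x, hx⟩
  · simp
  have hIcc {B : Set ℝ} (hne : B.Nonempty) (hc : IsCompact B) (hconv : Convex ℝ B) :
      ∃ l r, l ≤ r ∧ B = Icc l r := by
    have hB := eq_Icc_of_connected_compact ⟨hne, hconv.isPreconnected⟩ hc
    exact ⟨_, _, nonempty_Icc.1 (hB ▸ hne), hB⟩
  obtain ⟨y, hy, z, hz, -⟩ := h x hx
  obtain ⟨l₁, r₁, hlr₁, rfl⟩ := hIcc ⟨y, hy⟩ hc₁ hconv₁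
  obtain ⟨l₂, r₂, hlr₂, rfl⟩ := hIcc ⟨z, hz⟩ hc₂ hconv₂
  have hsub : A ⊆ Icc (a * l₁ + b * l₂) (a * r₁ + b * r₂) := by
    intro x hx
    obtain ⟨y, ⟨hly, hyr⟩, z, ⟨hlz, hzr⟩, rfl⟩ := h x hx
    constructor <;> gcongr
  calc volume A ≤ volume (Icc (a * l₁ + b * l₂) (a * r₁ + b * r₂)) := measure_mono hsub
    _ = ENNReal.ofReal (a * (r₁ - l₁) + b * (r₂ - l₂)) := by
        rw [Real.volume_Icc]
        congr 1
        ring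
    _ = ENNReal.ofReal a * volume (Icc l₁ r₁) + ENNReal.ofReal b * volume (Icc l₂ r₂) := by
        rw [ENNReal.ofReal_add (mul_nonneg ha (sub_nonneg.2 hlr₁))
          (mul_nonneg hb (sub_nonneg.2 hlr₂)), ENNReal.ofReal_mul ha, ENNReal.ofReal_mul hb,
          Real.volume_Icc, Real.volume_Icc]

theorem isCompact_slice {F : Type*} [TopologicalSpace F] [T2Space F] {S : Set (ℝ × F)}
    (hS : IsCompact S) (u : F) : IsCompact ((fun x => (x, u)) ⁻¹' S) :=
  (hS.image continuous_fst).of_isClosed_subset (hS.isClosed.preimage (by fun_prop))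
    fun x hx => ⟨(x, u), hx, rfl⟩

theorem convex_slice {F : Type*} [AddCommGroup F] [Module ℝ F] {S : Set (ℝ × F)}
    (hS : Convex ℝ S) (u : F) : Convex ℝ ((fun x => (x, u)) ⁻¹' S) := by
  intro x hx y hy a b ha hb hab
  have hmem := hS hx hy ha hb hab
  rwa [Prod.smul_mk, Prod.smul_mk, Prod.mk_add_mk, Convex.combo_self hab] at hmem

section Shear

variable {F : Type*} [MeasurableSpace F]

/-- The shear of `ℝ × F` which at time `t` moves the point `(x, u)` to `(x + t * β u, u)`. -/
def shear {β : F → ℝ} (hβ : Measurable β) (t : ℝ) : ℝ × F ≃ᵐ ℝ × F where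
  toFun z := (z.1 + t * β z.2, z.2)
  invFun z := (z.1 - t * β z.2, z.2)
  left_inv z := by simp
  right_inv z := by simp
  measurable_toFun := by
    change Measurable fun z : ℝ × F => (z.1 + t * β z.2, z.2)
    fun_prop
  measurable_invFun := by
    change Measurable fun z : ℝ × F => (z.1 - t * β z.2, z.2)
    fun_prop

variable {ν : Measure F} [SigmaFinite ν] {β : F → ℝ} (hβ : Measurable β)

theorem measurePreserving_shear (t : ℝ) :
    MeasurePreserving (shear hβ t) (volume.prod ν) (volume.prod ν) := by
  have hskew : MeasurePreserving (fun z : F × ℝ => (z.1, z.2 + t * β z.1))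
      (ν.prod volume) (ν.prod volume) :=
    (MeasurePreserving.id ν).skew_product (g := fun u x => x + t * β u) (by fun_prop)
      (.of_forall fun u => (measurePreserving_add_right volume (t * β u)).map_eq)
  exact Measure.measurePreserving_swap.comp (hskew.comp Measure.measurePreserving_swap)

theorem measure_shear_image (t : ℝ) (K : Set (ℝ × F)) :
    (volume.prod ν) (shear hβ t '' K) = (volume.prod ν) K := by
  rw [← (measurePreserving_shear hβ t).measure_preimage_equiv,
    (shear hβ t).injective.preimage_image]

end Shear

section ShadowSystem

variable {ι F : Type*} [NormedAddCommGroup F] [NormedSpace ℝ F]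

/-- The projection whose images of a fixed set of points `(x, b, u)` form a shadow system in the
direction of the first coordinate: at time `t` the point `(x, u)` has moved by `t * b`. -/
def shadowMap (t : ℝ) : ℝ × ℝ × F →L[ℝ] ℝ × F :=
  (ContinuousLinearMap.fst ℝ ℝ (ℝ × F) +
    t • (ContinuousLinearMap.fst ℝ ℝ F).comp (ContinuousLinearMap.snd ℝ ℝ (ℝ × F))).prod
    ((ContinuousLinearMap.snd ℝ ℝ F).comp (ContinuousLinearMap.snd ℝ ℝ (ℝ × F)))

variable [MeasurableSpace F] [BorelSpace F] {ν : Measure F} [SigmaFinite ν] {β : F → ℝ}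
  (hβ : Measurable β)

/-- The length of the slices of a shadow system is a convex function of time. -/
theorem measure_shadowMap_image_le {B : Set (ℝ × ℝ × F)} (hB : IsCompact B) (hconv : Convex ℝ B)
    {a b : ℝ} (ha : 0 ≤ a) (hb : 0 ≤ b) (hab : a + b = 1) (s t : ℝ) :
    (volume.prod ν) (shadowMap (a * s + b * t) '' B) ≤
      ENNReal.ofReal a * (volume.prod ν) (shadowMap s '' B) +
        ENNReal.ofReal b * (volume.prod ν) (shadowMap t '' B) := by
  have hcompact (r : ℝ) : IsCompact (shadowMap r '' B) := hB.image (shadowMap r).continuous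
  have hmeas (r : ℝ) : MeasurableSet (shadowMap r '' B) := (hcompact r).measurableSet
  have hconvex (r : ℝ) : Convex ℝ (shadowMap r '' B) := hconv.linear_image (shadowMap r).toLinearMap
  rw [Measure.prod_apply_symm (hmeas _), Measure.prod_apply_symm (hmeas _),
    Measure.prod_apply_symm (hmeas _), ← lintegral_const_mul' _ _ ENNReal.ofReal_ne_top,
    ← lintegral_const_mul' _ _ ENNReal.ofReal_ne_top,
    ← lintegral_add_left ((measurable_measure_prodMk_right (hmeas s)).const_mul _)]
  refine lintegral_mono fun u => ?_
  refine volume_le_of_forall_exists_combination ha hb (isCompact_slice (hcompact s) u)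
    (isCompact_slice (hcompact t) u) (convex_slice (hconvex s) u) (convex_slice (hconvex t) u) ?_
  rintro x ⟨z, hz, hzx⟩
  obtain ⟨rfl, rfl⟩ := Prod.mk.inj hzx
  refine ⟨z.1 + s * z.2.1, ⟨z, hz, rfl⟩, z.1 + t * z.2.1, ⟨z, hz, rfl⟩, ?_⟩
  change z.1 + (a * s + b * t) * z.2.1 = _
  linear_combination -z.1 * hab

theorem measure_convexHull_range_shear_le [Finite ι] {a b : ℝ} (ha : 0 ≤ a) (hb : 0 ≤ b)
    (hab : a + b = 1) (s t : ℝ) (x : ι → ℝ × F) :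
    (volume.prod ν) (convexHull ℝ (range (shear hβ (a * s + b * t) ∘ x))) ≤
      ENNReal.ofReal a * (volume.prod ν) (convexHull ℝ (range (shear hβ s ∘ x))) +
        ENNReal.ofReal b * (volume.prod ν) (convexHull ℝ (range (shear hβ t ∘ x))) := by
  let lift (i : ι) : ℝ × ℝ × F := ((x i).1, β (x i).2, (x i).2)
  have hlift (r : ℝ) : convexHull ℝ (range (shear hβ r ∘ x)) =
      shadowMap r '' convexHull ℝ (range lift) :=
    (congrArg (convexHull ℝ) (range_comp (shadowMap r) lift)).trans
      ((shadowMap r).toLinearMap.image_convexHull _).symm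
  simp only [hlift]
  exact measure_shadowMap_image_le ((finite_range lift).isCompact_convexHull ℝ)
    (convex_convexHull ℝ _) ha hb hab s t

variable [Fintype ι] {p : ℝ} {K : Set (ℝ × F)}

theorem hullMoment_shear_image_le [FiniteDimensional ℝ F] (hp : 1 ≤ p) {a b : ℝ} (ha : 0 ≤ a)
    (hb : 0 ≤ b) (hab : a + b = 1) (s t : ℝ) :
    hullMoment (volume.prod ν) ι p (shear hβ (a * s + b * t) '' K) ≤
      ENNReal.ofReal a * hullMoment (volume.prod ν) ι p (shear hβ s '' K) +
        ENNReal.ofReal b * hullMoment (volume.prod ν) ι p (shear hβ t '' K) := by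
  have hab' : ENNReal.ofReal a + ENNReal.ofReal b = 1 := by
    rw [← ENNReal.ofReal_add ha hb, hab, ENNReal.ofReal_one]
  have hmeas : Measurable fun x : ι → ℝ × F =>
      (volume.prod ν) (convexHull ℝ (range (shear hβ s ∘ x))) ^ p :=
    (measurable_measure_convexHull_range.comp
      (MeasurableEquiv.piCongrRight fun _ : ι => shear hβ s).measurable).pow_const p
  simp only [hullMoment_image _ (measurePreserving_shear hβ _)]
  rw [← lintegral_const_mul' _ _ ENNReal.ofReal_ne_top,
    ← lintegral_const_mul' _ _ ENNReal.ofReal_ne_top, ← lintegral_add_left (hmeas.const_mul _)]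
  refine lintegral_mono fun x => ?_
  exact (ENNReal.rpow_le_rpow (measure_convexHull_range_shear_le hβ ha hb hab s t x)
    (zero_le_one.trans hp)).trans (ENNReal.rpow_arith_mean_le_arith_mean2_rpow _ _ _ _ hab' hp)

theorem normalizedHullMoment_le_of_shear [FiniteDimensional ℝ F] (hp : 1 ≤ p) {s t : ℝ}
    (hs : s ≤ 0) (ht : 0 ≤ t) {C : ℝ≥0∞}
    (hCs : normalizedHullMoment (volume.prod ν) ι p (shear hβ s '' K) ≤ C)
    (hCt : normalizedHullMoment (volume.prod ν) ι p (shear hβ t '' K) ≤ C) :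
    normalizedHullMoment (volume.prod ν) ι p K ≤ C := by
  obtain ⟨a, b, ha, hb, hab, hst⟩ : (0 : ℝ) ∈ segment ℝ s t :=
    segment_eq_Icc (hs.trans ht) ▸ ⟨hs, ht⟩
  have hK : shear hβ (a * s + b * t) '' K = K := by
    rw [← smul_eq_mul, ← smul_eq_mul, hst]
    simp [shear]
  have hab' : ENNReal.ofReal a + ENNReal.ofReal b = 1 := by
    rw [← ENNReal.ofReal_add ha hb, hab, ENNReal.ofReal_one]
  calc normalizedHullMoment (volume.prod ν) ι p K
      ≤ ENNReal.ofReal a * normalizedHullMoment (volume.prod ν) ι p (shear hβ s '' K) +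
          ENNReal.ofReal b * normalizedHullMoment (volume.prod ν) ι p (shear hβ t '' K) := by
        simp only [normalizedHullMoment, measure_shear_image, ← mul_div_assoc, ← ENNReal.add_div]
        gcongr
        simpa only [hK] using hullMoment_shear_image_le hβ hp ha hb hab s t (K := K)
    _ ≤ ENNReal.ofReal a * C + ENNReal.ofReal b * C := by gcongr
    _ = C := by rw [← add_mul, hab', one_mul]

end ShadowSystem

/-! ### Symmetric convex hulls -/

section SymmetricHull

theorem neg_mem_sdiff_pair {G : Type*} [AddCommGroup G] {S : Set G} {v : G}
    (hS : ∀ z ∈ S, -z ∈ S) : ∀ z ∈ S \ {v, -v}, -z ∈ S \ {v, -v} := by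
  rintro z ⟨hz, hzv⟩
  refine ⟨hS z hz, fun h => hzv ?_⟩
  simpa [neg_eq_iff_eq_neg, or_comm] using h

theorem neg_mem_pair {G : Type*} [AddCommGroup G] (v : G) :
    ∀ z ∈ ({v, -v} : Set G), -z ∈ ({v, -v} : Set G) := by
  simp

theorem neg_mem_union {G : Type*} [AddCommGroup G] {S T : Set G} (hS : ∀ z ∈ S, -z ∈ S)
    (hT : ∀ z ∈ T, -z ∈ T) : ∀ z ∈ S ∪ T, -z ∈ S ∪ T :=
  fun z hz => hz.imp (hS z) (hT z)

theorem image_sdiff_pair {F G H : Type*} [AddGroup G] [AddGroup H] [FunLike F G H]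
    [AddMonoidHomClass F G H] {f : F} (hf : Function.Injective f) (S : Set G) (v : G) :
    f '' (S \ {v, -v}) = f '' S \ {f v, -f v} := by
  rw [image_sdiff hf, image_pair, map_neg]

theorem ncard_sdiff_pair_add_two {G : Type*} [AddGroup G] {S : Set G} (hfin : S.Finite)
    (hS : ∀ z ∈ S, -z ∈ S) {v : G} (hv : v ∈ S) (hne : v ≠ -v) :
    (S \ {v, -v}).ncard + 2 = S.ncard := by
  rw [← ncard_pair hne, ncard_sdiff_add_ncard_of_subset (pair_subset hv (hS v hv)) hfin]

theorem ncard_sdiff_pair_lt {G : Type*} [Neg G] {S : Set G} (hfin : S.Finite) {v : G}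
    (hv : v ∈ S) : (S \ {v, -v}).ncard < S.ncard :=
  ncard_lt_ncard ⟨sdiff_subset, fun h => (h hv).2 (mem_insert v _)⟩ hfin

variable {V : Type*} [AddCommGroup V] [Module ℝ V] {B C R S : Set V} {e v w x y z : V}

theorem segment_subset_union_segment (he : e ∈ segment ℝ x y) :
    segment ℝ x y ⊆ segment ℝ x e ∪ segment ℝ e y := by
  rw [← insert_endpoints_openSegment, insert_subset_iff, insert_subset_iff]
  refine ⟨.inl (left_mem_segment ℝ x e), .inr (right_mem_segment ℝ e y), ?_⟩
  have hline : e ∈ range (AffineMap.lineMap x y : ℝ → V) :=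
    image_subset_range _ _ (segment_eq_image_lineMap ℝ x y ▸ he)
  refine (openSegment_subset_union x y hline).trans (insert_subset ?_ ?_)
  · exact .inl (right_mem_segment ℝ x e)
  · exact union_subset_union (openSegment_subset_segment ..) (openSegment_subset_segment ..)

theorem convexHull_insert_eq_union (hC : Convex ℝ C) (hne : C.Nonempty) (hB : B ⊆ C)
    (hmeet : ∀ z ∈ C, ∃ e ∈ B, e ∈ segment ℝ z v) :
    convexHull ℝ (insert v C) = C ∪ convexHull ℝ (insert v B) := by
  refine Subset.antisymm (fun x hx => ?_) (union_subset ?_ ?_)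
  · rw [convexHull_insert hne, hC.convexHull_eq, mem_convexJoin] at hx
    obtain ⟨_, rfl, z, hz, hx⟩ := hx
    obtain ⟨e, heB, he⟩ := hmeet z hz
    refine (segment_subset_union_segment he (segment_symm ℝ z _ ▸ hx)).imp
      (fun h => hC.segment_subset hz (hB heB) h) fun h => ?_
    exact segment_subset_convexHull (mem_insert_of_mem _ heB) (mem_insert _ _) h
  · exact (subset_insert v C).trans (subset_convexHull ℝ _)
  · exact convexHull_mono (insert_subset_insert hB)

theorem neg_mem_convexHull (hS : ∀ z ∈ S, -z ∈ S) : ∀ z ∈ convexHull ℝ S, -z ∈ convexHull ℝ S := by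
  have hsub : S ⊆ -S := hS
  intro z hz
  rw [← mem_neg, ← convexHull_neg]
  exact convexHull_mono hsub hz

theorem convexHull_union_pair_eq_union (hC : Convex ℝ C) (hsymm : ∀ z ∈ C, -z ∈ C)
    (hne : C.Nonempty) (hB : B ⊆ C)
    (hmeet : ∀ z ∈ C ∪ -convexHull ℝ (insert v B), ∃ e ∈ B, e ∈ segment ℝ z v) :
    convexHull ℝ (C ∪ {v, -v}) =
      C ∪ -convexHull ℝ (insert v B) ∪ convexHull ℝ (insert v B) := by
  have hneg : -convexHull ℝ (insert v B) = convexHull ℝ (insert (-v) (-B)) := by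
    rw [← convexHull_neg, neg_insert]
  have hlower : convexHull ℝ (insert (-v) C) = C ∪ -convexHull ℝ (insert v B) := by
    rw [hneg]
    refine convexHull_insert_eq_union hC hne (fun z hz => neg_neg z ▸ hsymm _ (hB hz)) ?_
    intro z hz
    obtain ⟨e, heB, he⟩ := hmeet (-z) (.inl (hsymm z hz))
    refine ⟨-e, neg_mem_neg.2 heB, ?_⟩
    obtain ⟨s, t, hs, ht, hst, rfl⟩ := he
    exact ⟨s, t, hs, ht, hst, by module⟩
  rw [← hlower] at hmeet ⊢
  rw [← convexHull_insert_eq_union (convex_convexHull ℝ _) (insert_nonempty _ _).convexHull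
    (hB.trans ((subset_insert _ _).trans (subset_convexHull ℝ _))) hmeet,
    insert_eq v (convexHull ℝ _), convexHull_convexHull_union_right, union_comm C, insert_union,
    singleton_union, singleton_union]

theorem convexHull_union_eq_of_mem (hR : ∀ z ∈ R, -z ∈ R) (hS : ∀ z ∈ S, -z ∈ S)
    (hw : w ∈ convexHull ℝ (R \ {w, -w} ∪ S)) :
    convexHull ℝ (R ∪ S) = convexHull ℝ (R \ {w, -w} ∪ S) := by
  refine Subset.antisymm (convexHull_min ?_ (convex_convexHull ℝ _))
    (convexHull_mono (union_subset_union_left _ sdiff_subset))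
  have hneg := neg_mem_convexHull (neg_mem_union (neg_mem_sdiff_pair hR) hS) w hw
  rintro z (hz | hz)
  · by_cases hzw : z ∈ ({w, -w} : Set V)
    · rcases hzw with rfl | rfl
      exacts [hw, hneg]
    · exact subset_convexHull ℝ _ (.inl ⟨hz, hzw⟩)
  · exact subset_convexHull ℝ _ (.inr hz)

theorem exists_ncard_le_convexHull_union_pair_eq (hR : R.Finite)
    (hsymm : ∀ z ∈ R, -z ∈ R) (hw : w ∈ R) (hw0 : w ≠ -w)
    (hmem : w ∈ convexHull ℝ (R \ {w, -w} ∪ {v, -v})) :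
    ∃ S : Set V, S.Finite ∧ (∀ z ∈ S, -z ∈ S) ∧ S.ncard ≤ R.ncard ∧
      convexHull ℝ (R ∪ {v, -v}) = convexHull ℝ S := by
  refine ⟨R \ {w, -w} ∪ {v, -v}, hR.sdiff.union (by simp),
    neg_mem_union (neg_mem_sdiff_pair hsymm) (neg_mem_pair v), ?_,
    convexHull_union_eq_of_mem hsymm (neg_mem_pair v) hmem⟩
  calc (R \ {w, -w} ∪ {v, -v}).ncard ≤ (R \ {w, -w}).ncard + ({v, -v} : Set V).ncard :=
        ncard_union_le _ _
    _ ≤ (R \ {w, -w}).ncard + 2 := by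
        gcongr
        exact (ncard_insert_le _ _).trans_eq (by rw [ncard_singleton])
    _ = R.ncard := ncard_sdiff_pair_add_two hR hsymm hw hw0

end SymmetricHull

/-! ### Caps of symmetric polygons -/

/-- The common edge of the caps, which the shears below leave fixed. -/
def capBase : Set (ℝ × ℝ) := Icc (-1) 1 ×ˢ {1}

theorem convexHull_neg_one_one : convexHull ℝ {-1, 1} = Icc (-1 : ℝ) 1 := by
  rw [convexHull_pair, segment_eq_Icc (by norm_num)]

theorem capBase_eq_convexHull : capBase = convexHull ℝ {(-1, 1), (1, 1)} := by
  rw [capBase, ← convexHull_neg_one_one, ← convexHull_singleton (𝕜 := ℝ) (1 : ℝ),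
    ← convexHull_prod, convexHull_singleton, insert_prod, singleton_prod_singleton, image_singleton,
    singleton_union]

/-- The triangle with base `capBase` and apex `(a, h)`. -/
def cap (a h : ℝ) : Set (ℝ × ℝ) := convexHull ℝ (insert (a, h) capBase)

/-- The part at height at most `1` of the cone with apex `(a, h)` spanned by `capBase`: the line
through `z` and the apex meets the line `y = 1` at abscissa
`((h - 1) * z.1 + (1 - z.2) * a) / (h - z.2)`. -/
def coneBelow (a h : ℝ) : Set (ℝ × ℝ) :=
  {z | z.2 ≤ 1 ∧ |(h - 1) * z.1 + (1 - z.2) * a| ≤ h - z.2}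

section Cap

variable {a h : ℝ} {z : ℝ × ℝ}

theorem mem_segment_apex (hh : 1 < h) (hz : z.2 ≤ 1) :
    (((h - 1) * z.1 + (1 - z.2) * a) / (h - z.2), (1 : ℝ)) ∈ segment ℝ z (a, h) := by
  have hpos : 0 < h - z.2 := by linarith
  refine ⟨(h - 1) / (h - z.2), (1 - z.2) / (h - z.2), div_nonneg (by linarith) hpos.le,
    div_nonneg (by linarith) hpos.le, by field_simp; ring, ?_⟩
  ext
  · simp only [Prod.fst_add, Prod.smul_fst, smul_eq_mul]
    ring
  · simp only [Prod.snd_add, Prod.smul_snd, smul_eq_mul]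
    field_simp
    ring

theorem exists_mem_capBase_mem_segment (hh : 1 < h) (hz : z ∈ coneBelow a h) :
    ∃ e ∈ capBase, e ∈ segment ℝ z (a, h) := by
  have hpos : 0 < h - z.2 := by linarith [hz.1]
  refine ⟨_, mk_mem_prod (abs_le.1 ?_) (mem_singleton 1), mem_segment_apex hh hz.1⟩
  rw [abs_div, abs_of_pos hpos]
  exact (div_le_one hpos).2 hz.2

theorem convex_coneBelow (a h : ℝ) : Convex ℝ (coneBelow a h) := by
  rintro x ⟨hx, hxc⟩ y ⟨hy, hyc⟩ s t hs ht hst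
  simp only [coneBelow, mem_ofPred_eq, Prod.fst_add, Prod.smul_fst, Prod.snd_add, Prod.smul_snd,
    smul_eq_mul]
  refine ⟨by nlinarith, ?_⟩
  calc |(h - 1) * (s * x.1 + t * y.1) + (1 - (s * x.2 + t * y.2)) * a|
      = |s * ((h - 1) * x.1 + (1 - x.2) * a) + t * ((h - 1) * y.1 + (1 - y.2) * a)| := by
        congr 1
        linear_combination -a * hst
    _ ≤ s * |(h - 1) * x.1 + (1 - x.2) * a| + t * |(h - 1) * y.1 + (1 - y.2) * a| := by
        refine (abs_add_le _ _).trans_eq ?_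
        rw [abs_mul, abs_mul, abs_of_nonneg hs, abs_of_nonneg ht]
    _ ≤ s * (h - x.2) + t * (h - y.2) := by gcongr
    _ = h - (s * x.2 + t * y.2) := by linear_combination h * hst

theorem neg_cap_subset_coneBelow (hh : 1 < h) (hbase : -capBase ⊆ coneBelow a h) :
    -cap a h ⊆ coneBelow a h := by
  rw [cap, ← convexHull_neg, neg_insert]
  refine convexHull_min (insert_subset ?_ hbase) (convex_coneBelow a h)
  have hright : -((-1 : ℝ), (1 : ℝ)) ∈ coneBelow a h := hbase (by simp [capBase])
  have hleft : -((1 : ℝ), (1 : ℝ)) ∈ coneBelow a h := hbase (by simp [capBase])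
  simp only [coneBelow, mem_ofPred_eq, Prod.neg_mk, abs_le] at hright hleft ⊢
  exact ⟨by linarith, by linarith, by linarith⟩

theorem convexHull_union_apex_pair {C : Set (ℝ × ℝ)} (hC : Convex ℝ C)
    (hsymm : ∀ z ∈ C, -z ∈ C) (hbase : capBase ⊆ C) (hcone : C ⊆ coneBelow a h) (hh : 1 < h) :
    convexHull ℝ (C ∪ {(a, h), -(a, h)}) = C ∪ -cap a h ∪ cap a h := by
  have hneg : -capBase ⊆ coneBelow a h := fun z hz => hcone (neg_neg z ▸ hsymm _ (hbase hz))
  refine convexHull_union_pair_eq_union hC hsymm ⟨(1, 1), hbase (by simp [capBase])⟩ hbase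
    fun z hz => ?_
  exact exists_mem_capBase_mem_segment hh
    (union_subset hcone (neg_cap_subset_coneBelow hh hneg) hz)

/-- The odd function vanishing on `[-1, 1]` with slope `1` outside. -/
def softThreshold (y : ℝ) : ℝ := max (y - 1) 0 - max (-y - 1) 0

theorem measurable_softThreshold : Measurable softThreshold := by
  unfold softThreshold
  fun_prop

theorem softThreshold_neg (y : ℝ) : softThreshold (-y) = -softThreshold y := by
  simp [softThreshold]

theorem softThreshold_of_abs_le_one {y : ℝ} (hy : |y| ≤ 1) : softThreshold y = 0 := by
  obtain ⟨hl, hr⟩ := abs_le.1 hy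
  rw [softThreshold, max_eq_right (by linarith), max_eq_right (by linarith), sub_zero]

theorem softThreshold_of_one_le {y : ℝ} (hy : 1 ≤ y) : softThreshold y = y - 1 := by
  rw [softThreshold, max_eq_left (by linarith), max_eq_right (by linarith), sub_zero]

/-- The shear with profile `softThreshold`: it fixes the strip `|y| ≤ 1` pointwise and moves the
caps above and below that strip affinely. -/
abbrev capShear (t : ℝ) : ℝ × ℝ ≃ᵐ ℝ × ℝ := shear measurable_softThreshold t

theorem capShear_neg (t : ℝ) (z : ℝ × ℝ) : capShear t (-z) = -capShear t z := by
  ext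
  · change -z.1 + t * softThreshold (-z.2) = -(z.1 + t * softThreshold z.2)
    rw [softThreshold_neg]
    ring
  · rfl

theorem capShear_image_neg (t : ℝ) (S : Set (ℝ × ℝ)) : capShear t '' (-S) = -(capShear t '' S) := by
  rw [← image_neg_eq_neg, ← image_neg_eq_neg, image_comm (capShear_neg t)]

theorem capShear_of_abs_le_one (t : ℝ) (hz : |z.2| ≤ 1) : capShear t z = z := by
  change (z.1 + t * softThreshold z.2, z.2) = z
  rw [softThreshold_of_abs_le_one hz, mul_zero, add_zero]

theorem capShear_image_cap (t : ℝ) (hh : 1 ≤ h) :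
    capShear t '' cap a h = cap (a + t * (h - 1)) h := by
  let f : ℝ × ℝ →ᵃ[ℝ] ℝ × ℝ :=
    (AffineMap.fst + t • (AffineMap.snd - AffineMap.const ℝ (ℝ × ℝ) 1)).prod AffineMap.snd
  have hf (z : ℝ × ℝ) : f z = (z.1 + t * (z.2 - 1), z.2) := rfl
  have habove : cap a h ⊆ {z | 1 ≤ z.2} := by
    refine convexHull_min (insert_subset hh fun z hz => ge_of_eq hz.2) ?_
    exact convex_halfSpace_ge (LinearMap.snd ℝ ℝ ℝ).isLinear 1
  have hbase : f '' capBase = capBase := by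
    refine (image_congr fun z hz => ?_).trans (image_id _)
    rw [hf, show z.2 = 1 from hz.2]
    ext <;> simp [show z.2 = 1 from hz.2]
  calc capShear t '' cap a h = f '' cap a h := image_congr fun z hz => by
        rw [hf, ← softThreshold_of_one_le (habove hz)]
        rfl
    _ = cap (a + t * (h - 1)) h := by
        rw [cap, AffineMap.image_convexHull, image_insert_eq, hbase, hf, cap]

theorem capShear_image_convexHull_union_apex_pair {C : Set (ℝ × ℝ)} {a' : ℝ} (hC : Convex ℝ C)
    (hsymm : ∀ z ∈ C, -z ∈ C) (hbase : capBase ⊆ C) (hcone : C ⊆ coneBelow a h)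
    (hcone' : C ⊆ coneBelow a' h) (hh : 1 < h) :
    capShear ((a' - a) / (h - 1)) '' convexHull ℝ (C ∪ {(a, h), -(a, h)}) =
      convexHull ℝ (C ∪ {(a', h), -(a', h)}) := by
  have hfix : capShear ((a' - a) / (h - 1)) '' C = C := by
    refine (image_congr fun z hz => ?_).trans (image_id C)
    exact capShear_of_abs_le_one _
      (abs_le.2 ⟨neg_le.1 (hcone (hsymm z hz)).1, (hcone hz).1⟩)
  have hapex : a + (a' - a) / (h - 1) * (h - 1) = a' := by
    rw [div_mul_cancel₀ _ (sub_ne_zero.2 hh.ne'), add_sub_cancel]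
  rw [convexHull_union_apex_pair hC hsymm hbase hcone hh,
    convexHull_union_apex_pair hC hsymm hbase hcone' hh, image_union, image_union,
    capShear_image_neg, capShear_image_cap _ hh.le, hfix, hapex]

/-- The reflection in the vertical axis. -/
def reflectX : (ℝ × ℝ) ≃ₗ[ℝ] ℝ × ℝ := (LinearEquiv.neg ℝ (M := ℝ)).prodCongr (.refl ℝ ℝ)

theorem reflectX_apply (z : ℝ × ℝ) : reflectX z = (-z.1, z.2) := rfl

theorem reflectX_mem_coneBelow_neg_iff : reflectX z ∈ coneBelow (-a) h ↔ z ∈ coneBelow a h := by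
  rw [coneBelow, coneBelow, mem_ofPred_eq, mem_ofPred_eq, reflectX_apply, ← abs_neg]
  ring_nf

/-- Slide the apex to the right until a side of the cap is aligned with a point of `R`. -/
theorem exists_right_end_position {R : Set (ℝ × ℝ)} (hR : R.Finite) (hh : 1 < h)
    (hcorner : (1, -1) ∈ R) (hcone : R ⊆ coneBelow a h) :
    ∃ a' ≥ a, R ⊆ coneBelow a' h ∧
      (1, 1) ∈ convexHull ℝ (R \ {(1, 1), -(1, 1)} ∪ {(a', h), -(a', h)}) := by
  let bound (z : ℝ × ℝ) : ℝ := (h - z.2 - (h - 1) * z.1) / (1 - z.2)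
  have le_bound_iff {z : ℝ × ℝ} {c : ℝ} (hz : z.2 < 1) :
      c ≤ bound z ↔ (h - 1) * z.1 + (1 - z.2) * c ≤ h - z.2 := by
    rw [le_div_iff₀ (sub_pos.2 hz)]
    constructor <;> intro h <;> linarith
  obtain ⟨m, ⟨hmR, hm⟩, hmin⟩ := exists_min_image {z ∈ R | z.2 < 1} bound (hR.sep _)
    ⟨(1, -1), hcorner, by norm_num⟩
  have ha : a ≤ bound m := (le_bound_iff hm).2 (abs_le.1 (hcone hmR).2).2
  refine ⟨bound m, ha, fun z hz => ?_, ?_⟩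
  · obtain ⟨hz1, hzl, hzr⟩ := (hcone hz).imp_right abs_le.1
    refine ⟨hz1, abs_le.2 ⟨hzl.trans (by gcongr), ?_⟩⟩
    rcases hz1.lt_or_eq with hlt | heq
    · exact (le_bound_iff hlt).1 (hmin z ⟨hz, hlt⟩)
    · simpa [heq] using hzr
  · have haligned : (h - 1) * m.1 + (1 - m.2) * bound m = h - m.2 := by
      rw [mul_div_cancel₀ _ (sub_pos.2 hm).ne']
      ring
    have hseg := mem_segment_apex (a := bound m) hh hm.le
    rw [haligned, div_self (by linarith)] at hseg
    refine segment_subset_convexHull (.inl ⟨hmR, ?_⟩) (.inr (mem_insert _ _)) hseg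
    rintro (rfl | rfl)
    · exact lt_irrefl _ hm
    · have hle := hmin (1, -1) ⟨hcorner, by norm_num⟩
      norm_num [bound] at hle
      linarith

theorem exists_left_end_position {R : Set (ℝ × ℝ)} (hR : R.Finite) (hh : 1 < h)
    (hcorner : (-1, -1) ∈ R) (hcone : R ⊆ coneBelow a h) :
    ∃ a' ≤ a, R ⊆ coneBelow a' h ∧
      (-1, 1) ∈ convexHull ℝ (R \ {(-1, 1), -(-1, 1)} ∪ {(a', h), -(a', h)}) := by
  obtain ⟨c, hc, hconec, hmem⟩ := exists_right_end_position (a := -a) (hR.image reflectX) hh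
    ⟨_, hcorner, by simp [reflectX_apply]⟩
    (by rintro _ ⟨z, hz, rfl⟩; exact reflectX_mem_coneBelow_neg_iff.2 (hcone hz))
  refine ⟨-c, neg_le.1 hc, fun z hz => ?_, ?_⟩
  · rw [← reflectX_mem_coneBelow_neg_iff, neg_neg]
    exact hconec ⟨z, hz, rfl⟩
  · have himage := mem_image_of_mem reflectX.toLinearMap hmem
    rw [LinearMap.image_convexHull, LinearEquiv.coe_coe, image_union,
      image_sdiff_pair reflectX.injective, image_image, image_pair] at himage
    simpa [reflectX_apply] using himage

theorem capBase_subset_convexHull {R : Set (ℝ × ℝ)} (hright : (1, 1) ∈ R) (hleft : (-1, 1) ∈ R) :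
    capBase ⊆ convexHull ℝ R := by
  rw [capBase_eq_convexHull]
  exact convexHull_mono (insert_subset hleft (singleton_subset_iff.2 hright))

theorem normalizedHullMoment_convexHull_union_apex_pair_le {ι : Type*} [Fintype ι] {p : ℝ}
    (hp : 1 ≤ p) {C : ℝ≥0∞} {R : Set (ℝ × ℝ)} (hR : R.Finite) (hsymm : ∀ z ∈ R, -z ∈ R)
    (hright : (1, 1) ∈ R) (hleft : (-1, 1) ∈ R) (hh : 1 < h) (hcone : R ⊆ coneBelow a h)
    (hC : ∀ S : Set (ℝ × ℝ), S.Finite → (∀ z ∈ S, -z ∈ S) → S.ncard ≤ R.ncard →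
      normalizedHullMoment volume ι p (convexHull ℝ S) ≤ C) :
    normalizedHullMoment volume ι p (convexHull ℝ (R ∪ {(a, h), -(a, h)})) ≤ C := by
  have hend {a' : ℝ} {w : ℝ × ℝ} (hw : w ∈ R) (hw0 : w ≠ -w) (hcone' : R ⊆ coneBelow a' h)
      (hmem : w ∈ convexHull ℝ (R \ {w, -w} ∪ {(a', h), -(a', h)})) :
      normalizedHullMoment volume ι p (capShear ((a' - a) / (h - 1)) ''
        convexHull ℝ (R ∪ {(a, h), -(a, h)})) ≤ C := by
    obtain ⟨S, hS, hS_symm, hcard, hS_hull⟩ :=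
      exists_ncard_le_convexHull_union_pair_eq hR hsymm hw hw0 hmem
    rw [← convexHull_convexHull_union_left, capShear_image_convexHull_union_apex_pair
      (convex_convexHull ℝ R) (neg_mem_convexHull hsymm) (capBase_subset_convexHull hright hleft)
      (convexHull_min hcone (convex_coneBelow a h)) (convexHull_min hcone' (convex_coneBelow a' h))
      hh, convexHull_convexHull_union_left, hS_hull]
    exact hC S hS hS_symm hcard
  obtain ⟨l, hla, hcone_l, hmem_l⟩ :=
    exists_left_end_position hR hh (hsymm _ hright) hcone
  obtain ⟨r, har, hcone_r, hmem_r⟩ :=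
    exists_right_end_position hR hh (by simpa using hsymm _ hleft) hcone
  exact normalizedHullMoment_le_of_shear measurable_softThreshold hp
    (div_nonpos_of_nonpos_of_nonneg (sub_nonpos.2 hla) (sub_nonneg.2 hh.le))
    (div_nonneg (sub_nonneg.2 har) (sub_nonneg.2 hh.le))
    (hend hleft (by norm_num [Prod.ext_iff]) hcone_l hmem_l)
    (hend hright (by norm_num [Prod.ext_iff]) hcone_r hmem_r)

end Cap

/-! ### Neighbours of a vertex -/

section Irredundant

variable {V W : Type*} [AddCommGroup V] [Module ℝ V] [AddCommGroup W] [Module ℝ W]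
  {S Y : Set V} {u v w : V} {α γ c : ℝ}

theorem smul_add_smul_mem_convexHull (hS : ∀ z ∈ S, -z ∈ S) (hu : u ∈ S) (hw : w ∈ S)
    (hα : 0 ≤ α) (hγ : 0 ≤ γ) (hle : α + γ ≤ 1) : α • u + γ • w ∈ convexHull ℝ S := by
  have hconv := convex_convexHull ℝ S
  have hzero : (0 : V) ∈ convexHull ℝ S := by
    have hmid := hconv (subset_convexHull ℝ S hu) (subset_convexHull ℝ S (hS u hu))
      (show (0 : ℝ) ≤ 1 / 2 by norm_num) (show (0 : ℝ) ≤ 1 / 2 by norm_num) (by norm_num)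
    rwa [smul_neg, add_neg_cancel] at hmid
  have hsum := hconv.sum_mem (t := Finset.univ) (w := ![α, γ, 1 - α - γ]) (z := ![u, w, 0])
    (by simpa [Fin.forall_fin_succ] using ⟨hα, hγ, by linarith⟩)
    (by simp [Fin.sum_univ_three])
    (by simpa [Fin.forall_fin_succ] using
      ⟨subset_convexHull ℝ S hu, subset_convexHull ℝ S hw, hzero⟩)
  simpa [Fin.sum_univ_three] using hsum

/-- No antipodal pair of points of `Y` can be dropped without shrinking the convex hull: the points
of `Y` are the vertices of a symmetric polytope. -/
def SymmIrredundant (Y : Set V) : Prop :=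
  ∀ v ∈ Y, v ∉ convexHull ℝ (Y \ {v, -v})

theorem SymmIrredundant.image (hY : SymmIrredundant Y) (A : V ≃ₗ[ℝ] W) :
    SymmIrredundant (A '' Y) := by
  rintro _ ⟨v, hv, rfl⟩ hmem
  rw [← image_sdiff_pair A.injective, ← LinearEquiv.coe_coe, ← LinearMap.image_convexHull,
    LinearEquiv.coe_coe, A.injective.mem_set_image] at hmem
  exact hY v hv hmem

theorem SymmIrredundant.smul_ne (hY : SymmIrredundant Y) (hsymm : ∀ z ∈ Y, -z ∈ Y) (hv : v ∈ Y)
    (hu : u ∈ Y \ {v, -v}) (hc : 0 ≤ c) : c • u ≠ v := by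
  have hne {x y : V} (hx : x ∈ Y) (hy : y ∈ Y \ {x, -x}) {b : ℝ} (hb : 0 ≤ b) (hb1 : b ≤ 1) :
      b • y ≠ x := fun h => hY x hx <| by
    simpa [h] using smul_add_smul_mem_convexHull (neg_mem_sdiff_pair hsymm) hy hy hb le_rfl
      (by simpa using hb1)
  rcases le_or_gt c 1 with hc1 | hc1
  · exact hne hv hu hc hc1
  · rintro rfl
    have hvu : c • u ∈ Y \ {u, -u} := by
      refine ⟨hv, fun h => hu.2 (h.imp Eq.symm fun h => neg_eq_iff_eq_neg.1 h.symm)⟩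
    exact hne hu.1 hvu (inv_nonneg.2 hc) (inv_le_one_of_one_le₀ hc1.le)
      (inv_smul_smul₀ (by linarith) u)

end Irredundant

/-- The determinant of two vectors of the plane. -/
def cross (u w : ℝ × ℝ) : ℝ := u.1 * w.2 - u.2 * w.1

theorem cross_smul_eq (u w z : ℝ × ℝ) : cross u w • z = cross z w • u + cross u z • w := by
  ext <;>
  · simp only [cross, Prod.smul_fst, Prod.smul_snd, Prod.fst_add, Prod.snd_add, smul_eq_mul]
    ring

theorem eq_smul_add_smul_of_cross_ne_zero {u w : ℝ × ℝ} (h : cross u w ≠ 0) (z : ℝ × ℝ) :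
    z = (cross z w / cross u w) • u + (cross u z / cross u w) • w := by
  rw [div_eq_inv_mul, div_eq_inv_mul, mul_smul, mul_smul, ← smul_add, ← cross_smul_eq,
    inv_smul_smul₀ h]

theorem cross_smul_add_smul_left (α γ : ℝ) (u w : ℝ × ℝ) :
    cross (α • u + γ • w) w = α * cross u w := by
  simp only [cross, Prod.smul_fst, Prod.smul_snd, Prod.fst_add, Prod.snd_add, smul_eq_mul]
  ring

theorem cross_smul_add_smul_right (α γ : ℝ) (u w : ℝ × ℝ) :
    cross u (α • u + γ • w) = γ * cross u w := by
  simp only [cross, Prod.smul_fst, Prod.smul_snd, Prod.fst_add, Prod.snd_add, smul_eq_mul]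
  ring

theorem cross_neg_left (u w : ℝ × ℝ) : cross (-u) w = -cross u w := by
  simp only [cross, Prod.fst_neg, Prod.snd_neg]
  ring

theorem cross_neg_right (u w : ℝ × ℝ) : cross u (-w) = -cross u w := by
  simp only [cross, Prod.fst_neg, Prod.snd_neg]
  ring

theorem cross_swap (u w : ℝ × ℝ) : cross w u = -cross u w := by
  simp only [cross]
  ring

/-- `v` lies in the cone spanned by the independent vectors `w₁, w₂ ∈ R`, with coefficients
`α, γ`. -/
structure IsConicRep (R : Set (ℝ × ℝ)) (v w₁ w₂ : ℝ × ℝ) (α γ : ℝ) : Prop where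
  mem_left : w₁ ∈ R
  mem_right : w₂ ∈ R
  cross_ne_zero : cross w₁ w₂ ≠ 0
  left_nonneg : 0 ≤ α
  right_nonneg : 0 ≤ γ
  eq : v = α • w₁ + γ • w₂

namespace IsConicRep

variable {R : Set (ℝ × ℝ)} {u v w w₁ w₂ z : ℝ × ℝ} {α γ r s : ℝ}

theorem swap (hv : IsConicRep R v w₁ w₂ α γ) : IsConicRep R v w₂ w₁ γ α where
  mem_left := hv.mem_right
  mem_right := hv.mem_left
  cross_ne_zero := by rw [cross_swap]; exact neg_ne_zero.2 hv.cross_ne_zero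
  left_nonneg := hv.right_nonneg
  right_nonneg := hv.left_nonneg
  eq := hv.eq.trans (add_comm _ _)

theorem coeff_add (hv : IsConicRep R v w₁ w₂ α γ) :
    α + γ = (cross v w₂ + cross w₁ v) / cross w₁ w₂ := by
  rw [hv.eq, cross_smul_add_smul_left, cross_smul_add_smul_right, ← add_mul,
    mul_div_cancel_right₀ _ hv.cross_ne_zero]

theorem exists_of_cross_ne_zero (hR : ∀ z ∈ R, -z ∈ R) (hu : u ∈ R) (hw : w ∈ R)
    (h : cross u w ≠ 0) (v : ℝ × ℝ) : ∃ w₁ w₂ α γ, IsConicRep R v w₁ w₂ α γ := by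
  obtain ⟨α, γ, hv⟩ : ∃ α γ : ℝ, v = α • u + γ • w := ⟨_, _, eq_smul_add_smul_of_cross_ne_zero h v⟩
  obtain ⟨u', hu', hcross', hv'⟩ : ∃ u' ∈ R, cross u' w ≠ 0 ∧ v = |α| • u' + γ • w := by
    rcases abs_choice α with hα | hα
    · exact ⟨u, hu, h, by rwa [hα]⟩
    · exact ⟨-u, hR u hu, by rwa [cross_neg_left, neg_ne_zero], by rwa [hα, neg_smul_neg]⟩
  rcases abs_choice γ with hγ | hγ
  · exact ⟨u', w, |α|, |γ|, hu', hw, hcross', abs_nonneg α, abs_nonneg γ, by rwa [hγ]⟩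
  · exact ⟨u', -w, |α|, |γ|, hu', hR w hw, by rwa [cross_neg_right, neg_ne_zero], abs_nonneg α,
      abs_nonneg γ, by rwa [hγ, neg_smul_neg]⟩

theorem exists_minimal (hR : R.Finite) (hv : IsConicRep R v u w r s) :
    ∃ w₁ w₂ α γ, IsConicRep R v w₁ w₂ α γ ∧
      ∀ w₁' w₂' α' γ', IsConicRep R v w₁' w₂' α' γ' → α + γ ≤ α' + γ' := by
  let sums : Set ℝ := {t | ∃ w₁ w₂ α γ, IsConicRep R v w₁ w₂ α γ ∧ t = α + γ}
  have hfin : sums.Finite := by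
    refine ((hR.prod hR).image
      fun q => (cross v q.2 + cross q.1 v) / cross q.1 q.2).subset ?_
    rintro _ ⟨w₁, w₂, α, γ, hrep, rfl⟩
    exact ⟨(w₁, w₂), ⟨hrep.mem_left, hrep.mem_right⟩, hrep.coeff_add.symm⟩
  obtain ⟨_, ⟨w₁, w₂, α, γ, hrep, rfl⟩, hmin⟩ :=
    exists_min_image sums id hfin ⟨r + s, u, w, r, s, hv, rfl⟩
  exact ⟨w₁, w₂, α, γ, hrep, fun w₁' w₂' α' γ' h => hmin _ ⟨w₁', w₂', α', γ', h, rfl⟩⟩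

theorem exchange (hv : IsConicRep R v w₁ w₂ α γ) (hz : z ∈ R) (hz_eq : z = r • w₁ + s • w₂)
    (hr : 0 < r) (hrs : α * s ≤ γ * r) : IsConicRep R v z w₂ (α / r) (γ - α / r * s) where
  mem_left := hz
  mem_right := hv.mem_right
  cross_ne_zero := by
    rw [hz_eq, cross_smul_add_smul_left]
    exact mul_ne_zero hr.ne' hv.cross_ne_zero
  left_nonneg := div_nonneg hv.left_nonneg hr.le
  right_nonneg := by
    rw [sub_nonneg, div_mul_eq_mul_div, div_le_iff₀ hr]
    exact hrs
  eq := by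
    have hcancel : α / r * r = α := div_mul_cancel₀ α hr.ne'
    rw [hv.eq, hz_eq, smul_add, smul_smul, smul_smul, hcancel]
    module

theorem coeff_add_le_one (hv : IsConicRep R v w₁ w₂ α γ) (hα : 0 < α) (hγ : 0 < γ)
    (hmin : ∀ w₁' w₂' α' γ', IsConicRep R v w₁' w₂' α' γ' → α + γ ≤ α' + γ')
    (hz : z ∈ R) (hz_eq : z = r • w₁ + s • w₂) : r + s ≤ 1 := by
  by_contra! hlt
  have hleft (hr : 0 < r) : ¬ α * s ≤ γ * r := fun hrs => by
    have hle := hmin _ _ _ _ (hv.exchange hz hz_eq hr hrs)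
    have hpos : 0 < α / r := div_pos hα hr
    have hcancel : α / r * r = α := div_mul_cancel₀ α hr.ne'
    nlinarith
  have hright (hs : 0 < s) : ¬ γ * r ≤ α * s := fun hrs => by
    have hle := hmin _ _ _ _ (hv.swap.exchange hz (hz_eq.trans (add_comm _ _)) hs hrs)
    have hpos : 0 < γ / s := div_pos hγ hs
    have hcancel : γ / s * s = γ := div_mul_cancel₀ γ hs.ne'
    nlinarith
  rcases le_or_gt r 0 with hr | hr
  · exact hright (by linarith) (by nlinarith)
  · rcases le_or_gt s 0 with hs | hs
    · exact hleft hr (by nlinarith)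
    · exact (le_total (α * s) (γ * r)).elim (hleft hr) (hright hs)

end IsConicRep

/-- The linear coordinates in which `w₁` and `w₂` become the corners `(1, 1)` and `(-1, 1)`. -/
def cornerEquiv {w₁ w₂ : ℝ × ℝ} (h : cross w₁ w₂ ≠ 0) : (ℝ × ℝ) ≃ₗ[ℝ] ℝ × ℝ where
  toFun z := ((cross z w₂ - cross w₁ z) / cross w₁ w₂, (cross z w₂ + cross w₁ z) / cross w₁ w₂)
  map_add' x y := by
    ext <;> simp only [cross, Prod.fst_add, Prod.snd_add] <;> ring
  map_smul' c x := by
    ext <;> simp only [cross, Prod.smul_fst, Prod.smul_snd, smul_eq_mul, RingHom.id_apply] <;> ring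
  invFun q := ((q.1 + q.2) / 2) • w₁ + ((q.2 - q.1) / 2) • w₂
  left_inv z := by
    conv_rhs => rw [eq_smul_add_smul_of_cross_ne_zero h z]
    module
  right_inv q := by
    simp only [cross_smul_add_smul_left, cross_smul_add_smul_right]
    ext <;> field_simp <;> ring

theorem cornerEquiv_smul_add_smul {w₁ w₂ : ℝ × ℝ} (h : cross w₁ w₂ ≠ 0) (α γ : ℝ) :
    cornerEquiv h (α • w₁ + γ • w₂) = (α - γ, α + γ) := by
  change ((_ - _) / _, (_ + _) / _) = _
  rw [cross_smul_add_smul_left, cross_smul_add_smul_right, ← sub_mul, ← add_mul,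
    mul_div_cancel_right₀ _ h, mul_div_cancel_right₀ _ h]

theorem cornerEquiv_left {w₁ w₂ : ℝ × ℝ} (h : cross w₁ w₂ ≠ 0) : cornerEquiv h w₁ = (1, 1) := by
  simpa using cornerEquiv_smul_add_smul h 1 0

theorem cornerEquiv_right {w₁ w₂ : ℝ × ℝ} (h : cross w₁ w₂ ≠ 0) : cornerEquiv h w₂ = (-1, 1) := by
  simpa using cornerEquiv_smul_add_smul h 0 1

section CapCoordinates

variable {a h : ℝ} {Y : Set (ℝ × ℝ)} {v z : ℝ × ℝ}

/-- Otherwise `(1, 1)` would lie in the triangle with vertices `z`, `(a, h)` and `(-1, 1)`. -/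
theorem SymmIrredundant.apex_line_le (hY : SymmIrredundant Y) (hright : (1, 1) ∈ Y)
    (hleft : (-1, 1) ∈ Y) (hv : (a, h) ∈ Y) (hh : 1 < h) (ha : a ≤ h) (hz : z ∈ Y)
    (hz1 : z.2 ≤ 1) : (h - 1) * z.1 + (1 - z.2) * a ≤ h - z.2 := by
  by_contra! hlt
  set c : ℝ := ((h - 1) * z.1 + (1 - z.2) * a) / (h - z.2) with hc
  have hc1 : 1 < c := (one_lt_div (by linarith)).2 hlt
  have hzR : z ∈ Y \ {(1, 1), -(1, 1)} := by
    refine ⟨hz, ?_⟩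
    rintro (rfl | rfl)
    · simp at hlt
    · simp only [Prod.fst_neg, Prod.snd_neg] at hlt
      linarith
  have hvR : (a, h) ∈ Y \ {(1, 1), -(1, 1)} :=
    ⟨hv, by
    rintro (heq | heq) <;> linarith [congrArg Prod.snd heq, Prod.snd_neg ((1 : ℝ), (1 : ℝ))]⟩
  have hleftR : (-1, 1) ∈ Y \ {(1, 1), -(1, 1)} := ⟨hleft, by norm_num⟩
  have hcR := segment_subset_convexHull hzR hvR (mem_segment_apex hh hz1)
  rw [← hc] at hcR
  refine hY _ hright ((convex_convexHull ℝ _).segment_subset (subset_convexHull ℝ _ hleftR) hcR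
    ⟨(c - 1) / (c + 1), 2 / (c + 1), div_nonneg (by linarith) (by linarith),
      div_nonneg (by norm_num) (by linarith), ?_, ?_⟩)
  · rw [← add_div, div_eq_one_iff_eq (by linarith)]
    ring
  · have : c + 1 ≠ 0 := by linarith
    ext
    · simp only [Prod.fst_add, Prod.smul_fst, smul_eq_mul]
      field_simp
      ring
    · simp only [Prod.snd_add, Prod.smul_snd, smul_eq_mul]
      field_simp
      ring

theorem SymmIrredundant.mem_coneBelow (hY : SymmIrredundant Y) (hright : (1, 1) ∈ Y)
    (hleft : (-1, 1) ∈ Y) (hv : (a, h) ∈ Y) (hh : 1 < h) (ha : |a| ≤ h) (hz : z ∈ Y)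
    (hz1 : z.2 ≤ 1) : z ∈ coneBelow a h := by
  obtain ⟨hal, har⟩ := abs_le.1 ha
  have hupper := hY.apex_line_le hright hleft hv hh har hz hz1
  have hlower := (hY.image reflectX).apex_line_le (a := -a) (h := h) (z := reflectX z)
    ⟨_, hleft, by simp [reflectX_apply]⟩ ⟨_, hright, by simp [reflectX_apply]⟩
    ⟨_, hv, rfl⟩ hh (neg_le.1 hal) ⟨z, hz, rfl⟩ hz1
  simp only [reflectX_apply] at hlower
  exact ⟨hz1, abs_le.2 ⟨by linarith, hupper⟩⟩

/-- The corners are the neighbours of `v`, found as the pair of points whose cone contains `v` with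
the smallest sum of coefficients. -/
theorem SymmIrredundant.exists_linearEquiv_image_subset_coneBelow (hY : SymmIrredundant Y)
    (hfin : Y.Finite) (hsymm : ∀ z ∈ Y, -z ∈ Y) (hv : v ∈ Y) {u w : ℝ × ℝ}
    (hu : u ∈ Y \ {v, -v}) (hw : w ∈ Y \ {v, -v}) (huw : cross u w ≠ 0) :
    ∃ (A : (ℝ × ℝ) ≃ₗ[ℝ] ℝ × ℝ) (a h : ℝ), A v = (a, h) ∧ 1 < h ∧
      (1, 1) ∈ A '' (Y \ {v, -v}) ∧ (-1, 1) ∈ A '' (Y \ {v, -v}) ∧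
      A '' (Y \ {v, -v}) ⊆ coneBelow a h := by
  have hR_symm := neg_mem_sdiff_pair (v := v) hsymm
  obtain ⟨_, _, _, _, hrep⟩ := IsConicRep.exists_of_cross_ne_zero hR_symm hu hw huw v
  obtain ⟨w₁, w₂, α, γ, hrep, hmin⟩ := hrep.exists_minimal hfin.sdiff
  have hα : 0 < α := hrep.left_nonneg.lt_of_ne' fun hα =>
    hY.smul_ne hsymm hv hrep.mem_right hrep.right_nonneg (by simpa [hα] using hrep.eq.symm)
  have hγ : 0 < γ := hrep.right_nonneg.lt_of_ne' fun hγ =>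
    hY.smul_ne hsymm hv hrep.mem_left hrep.left_nonneg (by simpa [hγ] using hrep.eq.symm)
  have hh : 1 < α + γ := by
    by_contra! hle
    refine hY v hv ?_
    have := smul_add_smul_mem_convexHull hR_symm hrep.mem_left hrep.mem_right hα.le hγ.le hle
    rwa [← hrep.eq] at this
  let A := cornerEquiv hrep.cross_ne_zero
  have hAv : A v = (α - γ, α + γ) := by
    conv_lhs => rw [hrep.eq]
    exact cornerEquiv_smul_add_smul hrep.cross_ne_zero α γ
  refine ⟨A, α - γ, α + γ, hAv, hh, ⟨w₁, hrep.mem_left, cornerEquiv_left _⟩,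
    ⟨w₂, hrep.mem_right, cornerEquiv_right _⟩, ?_⟩
  rintro _ ⟨z, hz, rfl⟩
  refine (hY.image A).mem_coneBelow ⟨w₁, hrep.mem_left.1, cornerEquiv_left _⟩
    ⟨w₂, hrep.mem_right.1, cornerEquiv_right _⟩ ⟨v, hv, hAv⟩ hh
    (abs_le.2 ⟨by linarith, by linarith⟩) ⟨z, hz.1, rfl⟩ ?_
  have hz_eq := eq_smul_add_smul_of_cross_ne_zero hrep.cross_ne_zero z
  rw [hz_eq, cornerEquiv_smul_add_smul]
  exact hrep.coeff_add_le_one hα hγ hmin hz hz_eq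

end CapCoordinates

/-! ### Symmetric polygons -/

section Plane

variable {ι : Type*} [Fintype ι] {p : ℝ} {Y : Set (ℝ × ℝ)} {u w : ℝ × ℝ}

theorem normalizedHullMoment_convexHull_image (hp : 0 ≤ p) (A : (ℝ × ℝ) ≃ₗ[ℝ] ℝ × ℝ)
    (Y : Set (ℝ × ℝ)) :
    normalizedHullMoment volume ι p (convexHull ℝ (A '' Y)) =
      normalizedHullMoment volume ι p (convexHull ℝ Y) := by
  rw [← LinearEquiv.coe_coe, ← LinearMap.image_convexHull]
  exact normalizedHullMoment_image volume volume A.toContinuousLinearEquiv hp (convexHull ℝ Y)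

theorem volume_convexHull_eq_zero_of_cross_eq_zero (hY : ∀ u ∈ Y, ∀ w ∈ Y, cross u w = 0) :
    volume (convexHull ℝ Y) = 0 := by
  have hspan : ∀ x ∈ Submodule.span ℝ Y, ∀ y ∈ Submodule.span ℝ Y, cross x y = 0 := by
    intro x hx y hy
    induction hx, hy using Submodule.span_induction₂ with
    | mem_mem x y hx hy => exact hY x hx y hy
    | zero_left | zero_right => simp [cross]
    | add_left x y z _ _ _ hxz hyz =>
      simp only [cross, Prod.fst_add, Prod.snd_add] at *
      linarith
    | add_right x y z _ _ _ hxy hxz =>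
      simp only [cross, Prod.fst_add, Prod.snd_add] at *
      linarith
    | smul_left r x y _ _ hxy =>
      simp only [cross, Prod.smul_fst, Prod.smul_snd, smul_eq_mul] at *
      linear_combination r * hxy
    | smul_right r x y _ _ hxy =>
      simp only [cross, Prod.smul_fst, Prod.smul_snd, smul_eq_mul] at *
      linear_combination r * hxy
  have hproper : Submodule.span ℝ Y ≠ ⊤ := fun htop => by
    have hone := hspan (1, 0) (htop ▸ Submodule.mem_top) (0, 1) (htop ▸ Submodule.mem_top)
    simp [cross] at hone
  exact measure_mono_null (convexHull_min Submodule.subset_span (Submodule.span ℝ Y).convex)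
    (Measure.addHaar_submodule volume _ hproper)

theorem convexHull_corners :
    convexHull ℝ ({-1, 1} ×ˢ {-1, 1} : Set (ℝ × ℝ)) = Icc (-1) 1 ×ˢ Icc (-1) 1 := by
  rw [convexHull_prod, convexHull_neg_one_one]

theorem normalizedHullMoment_convexHull_two_pairs (hp : 0 ≤ p) (huw : cross u w ≠ 0) :
    normalizedHullMoment volume ι p (convexHull ℝ {u, -u, w, -w}) =
      normalizedHullMoment volume ι p (Icc (-1 : ℝ) 1 ×ˢ Icc (-1 : ℝ) 1) := by
  have hcorners : cornerEquiv huw '' {u, -u, w, -w} = {-1, 1} ×ˢ {-1, 1} := by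
    simp only [image_insert_eq, image_singleton, map_neg, cornerEquiv_left, cornerEquiv_right,
      Prod.neg_mk, neg_neg]
    ext ⟨x, y⟩
    simp only [mem_insert_iff, mem_singleton_iff, mem_prod, Prod.mk.injEq]
    tauto
  rw [← normalizedHullMoment_convexHull_image hp (cornerEquiv huw), hcorners, convexHull_corners]

theorem SymmIrredundant.normalizedHullMoment_convexHull_le (hY : SymmIrredundant Y) (hp : 1 ≤ p)
    (hfin : Y.Finite) (hsymm : ∀ z ∈ Y, -z ∈ Y) {v : ℝ × ℝ} (hv : v ∈ Y) (hu : u ∈ Y \ {v, -v})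
    (hw : w ∈ Y \ {v, -v}) (huw : cross u w ≠ 0) {C : ℝ≥0∞}
    (hC : ∀ S : Set (ℝ × ℝ), S.Finite → (∀ z ∈ S, -z ∈ S) → S.ncard < Y.ncard →
      normalizedHullMoment volume ι p (convexHull ℝ S) ≤ C) :
    normalizedHullMoment volume ι p (convexHull ℝ Y) ≤ C := by
  obtain ⟨A, a, h, hAv, hh, hright, hleft, hcone⟩ :=
    hY.exists_linearEquiv_image_subset_coneBelow hfin hsymm hv hu hw huw
  have hsplit : A '' Y = A '' (Y \ {v, -v}) ∪ {(a, h), -(a, h)} := by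
    rw [← hAv, ← map_neg, ← image_pair, ← image_union,
      sdiff_union_of_subset (pair_subset hv (hsymm v hv))]
  have hR_symm : ∀ z ∈ A '' (Y \ {v, -v}), -z ∈ A '' (Y \ {v, -v}) := by
    rintro _ ⟨z, hz, rfl⟩
    exact ⟨-z, neg_mem_sdiff_pair hsymm z hz, map_neg A z⟩
  rw [← normalizedHullMoment_convexHull_image (zero_le_one.trans hp) A, hsplit]
  refine normalizedHullMoment_convexHull_union_apex_pair_le hp (hfin.sdiff.image A) hR_symm hright
    hleft hh hcone fun S hS hS_symm hcard => hC S hS hS_symm ?_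
  rw [ncard_image_of_injective _ A.injective] at hcard
  exact hcard.trans_lt (ncard_sdiff_pair_lt hfin hv)

theorem normalizedHullMoment_convexHull_le_square (hp : 1 ≤ p) (hfin : Y.Finite)
    (hsymm : ∀ z ∈ Y, -z ∈ Y) :
    normalizedHullMoment volume ι p (convexHull ℝ Y) ≤
      normalizedHullMoment volume ι p (Icc (-1 : ℝ) 1 ×ˢ Icc (-1 : ℝ) 1) := by
  have hp0 : 0 < p := zero_lt_one.trans_le hp
  induction hn : Y.ncard using Nat.strong_induction_on generalizing Y with | _ n ih
  subst hn
  have ih' (S : Set (ℝ × ℝ)) (hS : S.Finite) (hS_symm : ∀ z ∈ S, -z ∈ S)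
      (hcard : S.ncard < Y.ncard) := ih _ hcard hS hS_symm rfl
  by_cases hY : SymmIrredundant Y
  · by_cases hcross : ∀ u ∈ Y, ∀ w ∈ Y, cross u w = 0
    · rw [normalizedHullMoment_of_measure_eq_zero (convex_convexHull ℝ Y) hp0
        (volume_convexHull_eq_zero_of_cross_eq_zero hcross)]
      exact zero_le
    push Not at hcross
    obtain ⟨u, hu, w, hw, huw⟩ := hcross
    have hsub : {u, -u, w, -w} ⊆ Y := by
      simp [insert_subset_iff, hu, hw, hsymm u hu, hsymm w hw]
    by_cases hfour : Y ⊆ {u, -u, w, -w}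
    · rw [hfour.antisymm hsub, normalizedHullMoment_convexHull_two_pairs hp0.le huw]
    · obtain ⟨v, hv, hvuw⟩ := not_subset.1 hfour
      refine hY.normalizedHullMoment_convexHull_le hp hfin hsymm hv ⟨hu, ?_⟩ ⟨hw, ?_⟩ huw ih'
      · rintro (rfl | rfl) <;> simp at hvuw
      · rintro (rfl | rfl) <;> simp at hvuw
  · simp only [SymmIrredundant, not_forall, not_not] at hY
    obtain ⟨v, hv, hmem⟩ := hY
    have hhull : convexHull ℝ Y = convexHull ℝ (Y \ {v, -v}) := by
      simpa using convexHull_union_eq_of_mem (S := ∅) hsymm (by simp) (by simpa using hmem)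
    rw [hhull]
    exact ih' _ hfin.sdiff (neg_mem_sdiff_pair hsymm) (ncard_sdiff_pair_lt hfin hv)

/-! ### Approximation by symmetric polytopes -/

section SymmetricPolytope

variable {V : Type*} [NormedAddCommGroup V] [NormedSpace ℝ V] [FiniteDimensional ℝ V]
  [MeasurableSpace V] [BorelSpace V] {K : Set V}

theorem measure_sdiff_eq_zero_of_subset_closure (μ : Measure V) [μ.IsAddHaarMeasure] {U : Set V}
    (hU : Convex ℝ U) (hKU : K ⊆ closure U) : μ (K \ U) = 0 :=
  measure_mono_null (sdiff_subset_sdiff hKU interior_subset) (hU.addHaar_frontier μ)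

theorem exists_monotone_finite_symm_measure_sdiff_eq_zero (μ : Measure V) [μ.IsAddHaarMeasure]
    (hsymm : ∀ z ∈ K, -z ∈ K) :
    ∃ Y : ℕ → Set V, Monotone Y ∧ (∀ j, (Y j).Finite) ∧ (∀ j, ∀ z ∈ Y j, -z ∈ Y j) ∧
      (∀ j, Y j ⊆ K) ∧ μ (K \ ⋃ j, convexHull ℝ (Y j)) = 0 := by
  rcases K.eq_empty_or_nonempty with rfl | hne
  · exact ⟨fun _ => ∅, monotone_const, by simp, by simp, by simp, by simp⟩
  have : Nonempty K := hne.to_subtype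
  let d (i : ℕ) : V := TopologicalSpace.denseSeq K i
  have hd : K ⊆ closure (range d) := by
    have hdense := Subtype.dense_iff.1 (TopologicalSpace.denseRange_denseSeq K)
    rwa [← range_comp] at hdense
  let Y (j : ℕ) : Set V := d '' Iic j ∪ -(d '' Iic j)
  have hY : Monotone Y := fun i j hij => by
    have hmono : d '' Iic i ⊆ d '' Iic j := image_mono (Iic_subset_Iic.2 hij)
    exact union_subset_union hmono (neg_subset_neg.2 hmono)
  have hYK (j : ℕ) : Y j ⊆ K := by
    have hdK : d '' Iic j ⊆ K := image_subset_iff.2 fun i _ => Subtype.coe_prop _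
    exact union_subset hdK fun z hz => neg_neg z ▸ hsymm _ (hdK hz)
  refine ⟨Y, hY, fun j => ?_, fun j z hz => ?_, hYK, ?_⟩
  · exact ((finite_Iic j).image d).union ((finite_Iic j).image d).neg
  · exact hz.symm.imp id fun h => neg_mem_neg.2 h
  · have hU : Convex ℝ (⋃ j, convexHull ℝ (Y j)) :=
      Directed.convex_iUnion (Monotone.directed_le fun i j hij => convexHull_mono (hY hij))
        fun j => convex_convexHull ℝ (Y j)
    refine measure_sdiff_eq_zero_of_subset_closure μ hU (hd.trans (closure_mono ?_))
    rintro _ ⟨j, rfl⟩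
    exact mem_iUnion.2 ⟨j, subset_convexHull ℝ _ (.inl ⟨j, self_mem_Iic, rfl⟩)⟩

end SymmetricPolytope

theorem normalizedHullMoment_le_square {K : Set (ℝ × ℝ)} (hp : 1 ≤ p) (hK : Convex ℝ K)
    (hsymm : ∀ z ∈ K, -z ∈ K) (hvol : volume K ≠ ∞) :
    normalizedHullMoment volume ι p K ≤
      normalizedHullMoment volume ι p (Icc (-1 : ℝ) 1 ×ˢ Icc (-1 : ℝ) 1) := by
  obtain ⟨Y, hmono, hfin, hY_symm, hYK, hnull⟩ :=
    exists_monotone_finite_symm_measure_sdiff_eq_zero volume hsymm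
  exact normalizedHullMoment_le_of_monotone (zero_lt_one.trans_le hp)
    (fun i j hij => convexHull_mono (hmono hij)) (fun j => convex_convexHull ℝ (Y j))
    (fun j => convexHull_min (hYK j) hK) hnull hvol
    fun j => normalizedHullMoment_convexHull_le_square hp (hfin j) (hY_symm j)

theorem normalizedHullMoment_le_image_square {W : Type*} [NormedAddCommGroup W] [NormedSpace ℝ W]
    [MeasurableSpace W] [BorelSpace W] (ν : Measure W) [ν.IsAddHaarMeasure] {K : Set W}
    (hp : 1 ≤ p) (hcompact : IsCompact K) (hconv : Convex ℝ K) (hsymm : ∀ z ∈ K, -z ∈ K)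
    (e : (ℝ × ℝ) ≃L[ℝ] W) :
    normalizedHullMoment ν ι p K ≤
      normalizedHullMoment ν ι p (e '' (Icc (-1 : ℝ) 1 ×ˢ Icc (-1 : ℝ) 1)) := by
  have hp0 : 0 ≤ p := zero_le_one.trans hp
  have hfin : FiniteDimensional ℝ W := e.toLinearEquiv.finiteDimensional
  have hsymm' : ∀ z ∈ e.symm '' K, -z ∈ e.symm '' K := by
    rintro _ ⟨z, hz, rfl⟩
    exact ⟨-z, hsymm z hz, map_neg e.symm z⟩
  rw [normalizedHullMoment_image volume ν e hp0, ← normalizedHullMoment_image ν volume e.symm hp0]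
  exact normalizedHullMoment_le_square hp (hconv.linear_image e.symm.toLinearEquiv.toLinearMap)
    hsymm' (hcompact.image e.symm.continuous).measure_ne_top

end Plane

/-- The identification of `ℝ × ℝ` with the Euclidean plane. -/
def prodEquivPlane : (ℝ × ℝ) ≃ₗ[ℝ] EuclideanSpace ℝ (Fin 2) :=
  (LinearEquiv.finTwoArrow ℝ ℝ).symm.trans (WithLp.linearEquiv 2 ℝ (Fin 2 → ℝ)).symm

theorem prodEquivPlane_image_prod (s : Set ℝ) :
    prodEquivPlane '' (s ×ˢ s) = {x | ∀ i, x i ∈ s} := by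
  rw [LinearEquiv.image_eq_preimage_symm]
  ext x
  exact (Fin.forall_fin_two (p := fun i => x i ∈ s)).symm

end RandomPolytope

open RandomPolytope

/-- For every symmetric convex body `K ⊆ ℝ²`, real `p ≥ 1` and integer `N ≥ 2`,
`𝔼 U_{K, N+1}^p ≤ 𝔼 U_{𝒫, N+1}^p`, where `𝒫` is any symmetric parallelogram
(the image of `[-1,1]²` under an invertible linear map). -/
theorem momentU_le_parallelogram
    (K : Set (EuclideanSpace ℝ (Fin 2))) (hK : IsSymConvexBody K)
    (p : ℝ) (hp : 1 ≤ p) (N : ℕ) (hN : 2 ≤ N)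
    (L : EuclideanSpace ℝ (Fin 2) ≃ₗ[ℝ] EuclideanSpace ℝ (Fin 2))
    (P : Set (EuclideanSpace ℝ (Fin 2)))
    (hP : P = L '' {x | ∀ i, x i ∈ Set.Icc (-1 : ℝ) 1}) :
    momentU 2 (N + 1) K p ≤ momentU 2 (N + 1) P p := by
  obtain ⟨hcompact, hconv, -, hsymm⟩ := hK
  have hp0 : 0 ≤ p := zero_le_one.trans hp
  let e := (prodEquivPlane.trans L).toContinuousLinearEquiv
  have heP : P = e '' (Icc (-1) 1 ×ˢ Icc (-1) 1) := by
    rw [hP, ← prodEquivPlane_image_prod, image_image]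
    rfl
  have hP_conv : Convex ℝ P :=
    heP ▸ ((convex_Icc _ _).prod (convex_Icc _ _)).linear_image e.toLinearEquiv.toLinearMap
  rw [momentU_eq_toReal_normalizedHullMoment 2 (N + 1) K hp0,
    momentU_eq_toReal_normalizedHullMoment 2 (N + 1) P hp0]
  refine ENNReal.toReal_mono
    ((normalizedHullMoment_le_one hP_conv hp0).trans_lt ENNReal.one_lt_top).ne ?_
  rw [heP]
  exact normalizedHullMoment_le_image_square volume hp hcompact hconv
    (fun z hz => mem_neg.1 (hsymm ▸ hz)) e
end
end

section
/- For every symmetric convex body K ⊂ ℝ², every real p ≥ 1, and every integer N ≥ 2, one has 𝔼 V_{K, N}^p ≤ 𝔼 V_{𝒫, N}^p, where 𝒫 is a symmetric parallelogram (the image of [-1,1]² under an invertible linear map). -/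
open MeasureTheory Set

noncomputable section

variable {E : Type*} [NormedAddCommGroup E] [InnerProductSpace ℝ E]

/-!
A symmetric polygon is the absolutely convex hull of its vertices, one from each antipodal pair.
If there are at least three such generators, apply a linear map that puts the two neighbours of one
vertex `v` on the line `x = 1`, and slide `±v` vertically, shearing the two triangles they cut off.
The area of the polygon stays constant. The symmetric hull of the moving sample points is a
projection of a fixed convex body in `ℝ³` along a varying direction (a shadow system), so its area
is a convex function of time. Hence so is the `p`-th moment, which is thus largest at an end of the
sliding range, where a neighbour of `v` ceases to be a vertex. Induction on the number of generators
leads to two of them, that is, to a parallelogram, and approximation from inside by polygons treats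
general bodies.
-/

section AbsConvexHull

open scoped Pointwise

variable {V W : Type*} [AddCommGroup V] [Module ℝ V] [AddCommGroup W] [Module ℝ W]
  {s : Set V} {x y : V}

theorem smul_add_smul_mem_of_absConvex (hs : AbsConvex ℝ s) (hx : x ∈ s) (hy : y ∈ s) {a b : ℝ}
    (hab : |a| + |b| ≤ 1) : a • x + b • y ∈ s := by
  have hmem : a • x + b • y ∈ |a| • s + |b| • s :=
    add_mem_add (hs.1.smul_mono (by simp) (smul_mem_smul_set hx))
      (hs.1.smul_mono (by simp) (smul_mem_smul_set hy))
  rw [← hs.2.add_smul (abs_nonneg a) (abs_nonneg b)] at hmem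
  exact hs.1 _ (by rwa [Real.norm_eq_abs, abs_of_nonneg (by positivity)]) hmem

theorem absConvexHull_image (f : V →ₗ[ℝ] W) (s : Set V) :
    absConvexHull ℝ (f '' s) = f '' absConvexHull ℝ s := by
  rw [← convexHull_union_neg_eq_absConvexHull, ← convexHull_union_neg_eq_absConvexHull,
    f.image_convexHull, image_union, image_neg_of_apply_neg_eq_neg fun x _ => map_neg f x]

theorem absConvexHull_insert_of_mem (hx : x ∈ absConvexHull ℝ s) :
    absConvexHull ℝ (insert x s) = absConvexHull ℝ s :=
  (absConvexHull_min (insert_subset hx subset_absConvexHull) absConvex_absConvexHull).antisymm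
    (absConvexHull_mono (subset_insert x s))

theorem absConvexHull_diff_singleton_of_mem (hx : x ∈ absConvexHull ℝ (s \ {x})) :
    absConvexHull ℝ (s \ {x}) = absConvexHull ℝ s := by
  refine (absConvexHull_mono sdiff_subset).antisymm ?_
  rw [← absConvexHull_insert_of_mem hx, insert_sdiff_singleton]
  exact absConvexHull_mono (subset_insert x s)

theorem absConvexHull_insert_absConvexHull (x : V) (s : Set V) :
    absConvexHull ℝ (insert x (absConvexHull ℝ s)) = absConvexHull ℝ (insert x s) :=
  (absConvexHull_min
    (insert_subset (subset_absConvexHull (mem_insert x s)) (absConvexHull_mono (subset_insert x s)))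
    absConvex_absConvexHull).antisymm
    (absConvexHull_mono (insert_subset_insert subset_absConvexHull))

theorem isCompact_absConvexHull_of_finite [TopologicalSpace V] [IsTopologicalAddGroup V]
    [ContinuousSMul ℝ V] (hs : s.Finite) : IsCompact (absConvexHull ℝ s) := by
  rw [← convexHull_union_neg_eq_absConvexHull]
  exact (hs.union hs.neg).isCompact_convexHull ℝ

/- The hull consists of the segments joining `s` to points `r • x` with `|r| ≤ 1`; since `0 ∈ s`,
the point `r • x` lies in one of the two one-sided hulls, according to the sign of `r`. -/
theorem absConvexHull_insert_subset (hs : AbsConvex ℝ s) (hne : s.Nonempty) (x : V) :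
    absConvexHull ℝ (insert x s) ⊆ convexHull ℝ (insert x s) ∪ -convexHull ℝ (insert x s) := by
  have h0 : (0 : V) ∈ s := hs.1.zero_mem hne
  have hsC : s ⊆ convexHull ℝ (insert x s) := (subset_insert x s).trans (subset_convexHull ℝ _)
  have hxC : x ∈ convexHull ℝ (insert x s) := subset_convexHull ℝ _ (mem_insert x s)
  have hseg : ∀ q ∈ s, ∀ r : ℝ, 0 ≤ r → r ≤ 1 → segment ℝ (r • x) q ⊆ convexHull ℝ (insert x s) :=
    fun q hq r hr₀ hr₁ => (convex_convexHull ℝ _).segment_subset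
      ((convex_convexHull ℝ _).smul_mem_of_zero_mem (hsC h0) hxC ⟨hr₀, hr₁⟩) (hsC hq)
  have hunion : insert x s ∪ -insert x s = {x, -x} ∪ s := by
    rw [neg_insert, hs.1.neg_eq]
    grind
  intro z hz
  rw [← convexHull_union_neg_eq_absConvexHull, hunion, convexHull_union (by simp) hne,
    convexHull_pair, hs.2.convexHull_eq, mem_convexJoin] at hz
  obtain ⟨_, ⟨a, b, ha, hb, hab, rfl⟩, q, hq, hzq⟩ := hz
  rw [smul_neg, ← sub_eq_add_neg, ← sub_smul] at hzq
  rcases le_total b a with hba | hba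
  · exact Or.inl (hseg q hq (a - b) (by linarith) (by linarith) hzq)
  · refine Or.inr (hseg (-q) (hs.1.neg_mem_iff.2 hq) (b - a) (by linarith) (by linarith) ?_)
    obtain ⟨c, d, hc, hd, hcd, rfl⟩ := hzq
    exact ⟨c, d, hc, hd, hcd, by module⟩

theorem mem_absConvexHull_of_mem_union_neg (hx : x ∈ s ∪ -s) : x ∈ absConvexHull ℝ s :=
  hx.elim (fun h => subset_absConvexHull h) fun h =>
    balanced_absConvexHull.neg_mem_iff.1 (subset_absConvexHull h)

theorem mem_absConvexHull_diff_pair {z : V} (hz : z ∈ s ∪ -s) (hzx : z ≠ x) (hzx' : z ≠ -x) :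
    z ∈ absConvexHull ℝ (s \ {x, -x}) := by
  refine mem_absConvexHull_of_mem_union_neg (hz.imp (fun h => ⟨h, by simp [hzx, hzx']⟩)
    fun h => ⟨h, ?_⟩)
  simp [neg_eq_iff_eq_neg, hzx, hzx']

end AbsConvexHull

section ConvexHullRange

variable {ι V : Type*} [AddCommGroup V] [Module ℝ V]

theorem convexHull_range_eq_image_stdSimplex [Fintype ι] (x : ι → V) :
    convexHull ℝ (range x) = Fintype.linearCombination ℝ x '' stdSimplex ℝ ι := by
  classical
  rw [← convexHull_rangle_single_eq_stdSimplex, LinearMap.image_convexHull, ← range_comp]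
  congr! 2
  ext i
  simp [Fintype.linearCombination_apply_single]

variable [TopologicalSpace V] [IsTopologicalAddGroup V] [ContinuousSMul ℝ V] [T2Space V]

variable (ι V) in
theorem isClosed_setOf_mem_convexHull_range [Finite ι] :
    IsClosed {q : (ι → V) × V | q.2 ∈ convexHull ℝ (range q.1)} := by
  cases nonempty_fintype ι
  have hcombination : IsClosed {r : stdSimplex ℝ ι × ((ι → V) × V) |
      Fintype.linearCombination ℝ r.2.1 r.1 = r.2.2} := by
    simp only [Fintype.linearCombination_apply]
    refine isClosed_eq (continuous_finsetSum _ fun i _ => ?_) (by fun_prop)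
    exact ((continuous_apply i).comp (continuous_subtype_val.comp continuous_fst)).smul
      (by fun_prop)
  convert isClosedMap_snd_of_compactSpace _ hcombination using 1
  ext q
  rw [mem_ofPred_eq, convexHull_range_eq_image_stdSimplex]
  constructor
  · rintro ⟨w, hw, hq⟩
    exact ⟨(⟨w, hw⟩, q), hq, rfl⟩
  · rintro ⟨⟨w, _⟩, hq, rfl⟩
    exact ⟨w, w.2, hq⟩

variable (ι V) in
theorem isClosed_setOf_mem_absConvexHull_range [Finite ι] :
    IsClosed {q : (ι → V) × V | q.2 ∈ absConvexHull ℝ (range q.1)} := by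
  have hcont : Continuous fun q : (ι → V) × V => (Sum.elim q.1 (-q.1), q.2) := by
    refine Continuous.prodMk (continuous_pi ?_) continuous_snd
    rintro (i | i) <;> simp only [Sum.elim_inl, Sum.elim_inr, Pi.neg_apply] <;> fun_prop
  convert (isClosed_setOf_mem_convexHull_range (ι ⊕ ι) V).preimage hcont using 1
  ext q
  have hneg : range (-q.1) = -range q.1 := by
    rw [← image_neg_eq_neg, ← range_comp]
    rfl
  simp [Sum.elim_range, hneg]

end ConvexHullRange

section SymHullMoment

/-- The `p`-th moment of the `μ`-measure, relative to that of `K`, of the absolutely convex hull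
of independent points `x i`, `i : ι`, each distributed according to `μ` conditioned on `K`.
The value is `0` when `μ K` is `0` or `∞` and `ι` is nonempty. -/
def symHullMoment {V : Type*} [AddCommGroup V] [Module ℝ V] [MeasurableSpace V]
    (ι : Type*) [Fintype ι] (μ : Measure V) (p : ℝ) (K : Set V) : ℝ :=
  (∫ x in univ.pi fun _ : ι => K, (μ.real (absConvexHull ℝ (range x)) / μ.real K) ^ p
    ∂Measure.pi fun _ => μ) / μ.real K ^ Fintype.card ι

variable {ι : Type*} [Fintype ι]

theorem momentV_eq_symHullMoment (n N : ℕ) (K : Set (EuclideanSpace ℝ (Fin n))) (p : ℝ) :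
    momentV n N K p = symHullMoment (Fin N) volume p K := by
  have hpi : {x : Fin N → EuclideanSpace ℝ (Fin n) | ∀ i, x i ∈ K} = univ.pi fun _ => K := by
    ext; simp
  simp only [momentV, symHullMoment, convexHull_union_neg_eq_absConvexHull, Measure.real,
    Fintype.card_fin, ← volume_pi, hpi]

section Algebraic

variable {V : Type*} [AddCommGroup V] [Module ℝ V] [MeasurableSpace V]

theorem symHullMoment_nonneg (μ : Measure V) (p : ℝ) (K : Set V) : 0 ≤ symHullMoment ι μ p K :=
  div_nonneg (integral_nonneg fun _ => by positivity) (by positivity)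

theorem symHullMoment_of_measure_eq_zero [Nonempty ι] {μ : Measure V} {K : Set V} (hK : μ K = 0)
    (p : ℝ) : symHullMoment ι μ p K = 0 := by
  simp [symHullMoment, Measure.real, hK]

theorem symHullMoment_smul_measure (μ : Measure V) [SigmaFinite μ] {c : NNReal} (hc : c ≠ 0)
    (p : ℝ) (K : Set V) : symHullMoment ι (c • μ) p K = symHullMoment ι μ p K := by
  have hpi : Measure.pi (fun _ : ι => c • μ) = c ^ Fintype.card ι • Measure.pi fun _ => μ := by
    refine Measure.pi_eq fun s _ => ?_
    simp only [Measure.smul_apply, Measure.pi_pi, ENNReal.smul_def, smul_eq_mul,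
      Finset.prod_mul_distrib]
    simp
  have hc' : (c : ℝ) ≠ 0 := by exact_mod_cast hc
  simp only [symHullMoment, hpi, Measure.restrict_smul, integral_smul_nnreal_measure,
    measureReal_nnreal_smul_apply, mul_div_mul_left _ _ hc', NNReal.smul_def, NNReal.coe_pow,
    mul_pow, smul_eq_mul, mul_div_mul_left _ _ (pow_ne_zero _ hc')]

end Algebraic

theorem setIntegral_pi_image_homeomorph {X Y : Type*} [TopologicalSpace X] [MeasurableSpace X]
    [BorelSpace X] [SecondCountableTopology X] [TopologicalSpace Y] [MeasurableSpace Y]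
    [BorelSpace Y] [SecondCountableTopology Y] {μ : Measure X} {ν : Measure Y}
    [SigmaFinite μ] [SigmaFinite ν] {e : X ≃ₜ Y} (he : MeasurePreserving e μ ν) (K : Set X)
    (f : (ι → Y) → ℝ) :
    ∫ y in univ.pi fun _ => e '' K, f y ∂Measure.pi (fun _ => ν) =
      ∫ x in univ.pi fun _ => K, f (e ∘ x) ∂Measure.pi fun _ => μ := by
  have hpi := measurePreserving_pi (fun _ : ι => μ) (fun _ => ν) fun _ => he
  rw [← hpi.setIntegral_preimage_emb
    (Homeomorph.piCongrRight fun _ : ι => e).measurableEmbedding]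
  congr 2
  ext x
  simp

variable {V W : Type*} [NormedAddCommGroup V] [NormedSpace ℝ V] [FiniteDimensional ℝ V]
  [MeasurableSpace V] [BorelSpace V] [NormedAddCommGroup W] [NormedSpace ℝ W]
  [FiniteDimensional ℝ W] [MeasurableSpace W] [BorelSpace W]

theorem symHullMoment_image (μ : Measure V) [μ.IsAddHaarMeasure] (ν : Measure W)
    [ν.IsAddHaarMeasure] (L : V ≃L[ℝ] W) (p : ℝ) (K : Set V) :
    symHullMoment ι ν p (L '' K) = symHullMoment ι μ p K := by
  have hmap : μ.map L = Measure.addHaarScalarFactor (μ.map L) ν • ν :=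
    Measure.isAddLeftInvariant_eq_smul _ _
  have hfactor : Measure.addHaarScalarFactor (μ.map L) ν ≠ 0 :=
    (Measure.addHaarScalarFactor_pos_of_isAddHaarMeasure _ _).ne'
  have hpres : MeasurePreserving L.toHomeomorph μ (μ.map L) := ⟨L.continuous.measurable, rfl⟩
  have himage (S : Set V) : (μ.map L).real (L '' S) = μ.real S := by
    rw [Measure.real, ← hpres.measure_preimage_emb L.toHomeomorph.measurableEmbedding]
    exact congr_arg μ.real (L.injective.preimage_image S)
  have hhull (x : ι → V) : absConvexHull ℝ (range (L ∘ x)) = L '' absConvexHull ℝ (range x) := by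
    rw [range_comp]
    exact absConvexHull_image (L : V →ₗ[ℝ] W) _
  rw [← symHullMoment_smul_measure ν hfactor, ← hmap, symHullMoment, symHullMoment, himage]
  congr 1
  refine (setIntegral_pi_image_homeomorph hpres K _).trans ?_
  simp only [ContinuousLinearEquiv.coe_toHomeomorph, hhull, himage]

theorem symHullMoment_absConvexHull_image (μ : Measure V) [μ.IsAddHaarMeasure] (ν : Measure W)
    [ν.IsAddHaarMeasure] (L : V ≃L[ℝ] W) (p : ℝ) (X : Set V) :
    symHullMoment ι ν p (absConvexHull ℝ (L '' X)) = symHullMoment ι μ p (absConvexHull ℝ X) := by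
  rw [← symHullMoment_image μ ν L]
  exact congr_arg _ (absConvexHull_image (L : V →ₗ[ℝ] W) X)

end SymHullMoment

section Integrability

theorem absConvexHull_subset_closedBall {V : Type*} [SeminormedAddCommGroup V] [NormedSpace ℝ V]
    {s : Set V} {R : ℝ} (hs : ∀ x ∈ s, ‖x‖ ≤ R) : absConvexHull ℝ s ⊆ Metric.closedBall 0 R :=
  absConvexHull_min (fun x hx => by simpa using hs x hx)
    ⟨balanced_closedBall_zero, convex_closedBall 0 R⟩

variable {ι : Type*} {V : Type*} [NormedAddCommGroup V] [NormedSpace ℝ V]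
  [FiniteDimensional ℝ V] [MeasurableSpace V] [BorelSpace V] {K : Set V} {p : ℝ}

theorem measurable_measureReal_absConvexHull_range [Finite ι] (μ : Measure V) [SFinite μ] :
    Measurable fun x : ι → V => μ.real (absConvexHull ℝ (range x)) :=
  (measurable_measure_prodMk_left
    (isClosed_setOf_mem_absConvexHull_range ι V).measurableSet).ennreal_toReal

theorem integrableOn_measureReal_absConvexHull_range_rpow [Fintype ι] (μ : Measure V)
    [IsFiniteMeasureOnCompacts μ] (hK : IsCompact K) {φ : V → V} (hφ : Continuous φ) (c : ℝ)
    (hp : 0 ≤ p) :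
    IntegrableOn (fun x : ι → V => (μ.real (absConvexHull ℝ (range (φ ∘ x))) / c) ^ p)
      (univ.pi fun _ => K) (Measure.pi fun _ => μ) := by
  obtain ⟨R, hR⟩ := (hK.image hφ).isBounded.exists_norm_le
  have hmeas : Measurable fun x : ι → V => (μ.real (absConvexHull ℝ (range (φ ∘ x))) / c) ^ p :=
    (((measurable_measureReal_absConvexHull_range μ).comp
      (by fun_prop : Measurable fun x : ι → V => φ ∘ x)).div_const c).pow_const p
  refine Measure.integrableOn_of_bounded (M := (μ.real (Metric.closedBall 0 R) / |c|) ^ p)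
    (isCompact_univ_pi fun _ => hK).measure_ne_top hmeas.aestronglyMeasurable ?_
  filter_upwards [ae_restrict_mem (MeasurableSet.univ_pi fun _ => hK.measurableSet)] with x hx
  refine (Real.abs_rpow_le_abs_rpow _ _).trans (Real.rpow_le_rpow (abs_nonneg _) ?_ hp)
  rw [abs_div, abs_of_nonneg measureReal_nonneg]
  gcongr
  · exact (isCompact_closedBall 0 R).measure_ne_top
  · refine absConvexHull_subset_closedBall (forall_mem_range.2 fun i => ?_)
    exact hR _ (mem_image_of_mem φ (hx i (mem_univ i)))

end Integrability

section ConvexOn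

variable {V : Type*} [AddCommGroup V] [Module ℝ V] {s : Set V}

theorem convexOn_comp_rpow {f : V → ℝ} (hf : ConvexOn ℝ s f) (hf₀ : ∀ x ∈ s, 0 ≤ f x) {p : ℝ}
    (hp : 1 ≤ p) : ConvexOn ℝ s fun x => f x ^ p :=
  ⟨hf.1, fun x hx y hy _ _ ha hb hab =>
    (Real.rpow_le_rpow (hf₀ _ (hf.1 hx hy ha hb hab)) (hf.2 hx hy ha hb hab)
      (zero_le_one.trans hp)).trans ((convexOn_rpow hp).2 (hf₀ x hx) (hf₀ y hy) ha hb hab)⟩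

theorem convexOn_integral {X : Type*} [MeasurableSpace X] {μ : Measure X} {f : V → X → ℝ}
    (hs : Convex ℝ s) (hf : ∀ x, ConvexOn ℝ s fun v => f v x)
    (hfint : ∀ v ∈ s, Integrable (f v) μ) : ConvexOn ℝ s fun v => ∫ x, f v x ∂μ := by
  refine ⟨hs, fun v hv w hw a b ha hb hab => ?_⟩
  have hv' := (hfint v hv).smul a
  have hw' := (hfint w hw).smul b
  simp only [← integral_smul]
  refine (integral_mono (hfint _ (hs hv hw ha hb hab)) (hv'.add hw') fun x => ?_).trans_eq
    (integral_add hv' hw')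
  exact (hf x).2 hv hw ha hb hab

end ConvexOn

section ShadowSystem

variable {F : Type*} [NormedAddCommGroup F] [NormedSpace ℝ F]

theorem ofReal_abs_sub_le_volume_of_convex {A : Set ℝ} (hA : Convex ℝ A) {x y : ℝ} (hx : x ∈ A)
    (hy : y ∈ A) : ENNReal.ofReal |y - x| ≤ volume A := by
  rw [← Real.volume_interval]
  exact measure_mono (hA.ordConnected.uIcc_subset hx hy)

theorem volume_image_fst_add_mul_snd_le {A : Set (ℝ × ℝ)} (hA : Convex ℝ A) {a b : ℝ} (ha : 0 ≤ a)
    (hb : 0 ≤ b) (hab : a + b = 1) (t₁ t₂ : ℝ) :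
    volume ((fun q => q.1 + (a * t₁ + b * t₂) * q.2) '' A) ≤
      ENNReal.ofReal a * volume ((fun q => q.1 + t₁ * q.2) '' A) +
        ENNReal.ofReal b * volume ((fun q => q.1 + t₂ * q.2) '' A) := by
  have hconv (t : ℝ) : Convex ℝ ((fun q : ℝ × ℝ => q.1 + t * q.2) '' A) :=
    hA.linear_image (LinearMap.fst ℝ ℝ ℝ + t • LinearMap.snd ℝ ℝ ℝ)
  refine (Real.volume_le_diam _).trans (Metric.ediam_le ?_)
  rintro _ ⟨q, hq, rfl⟩ _ ⟨r, hr, rfl⟩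
  rw [edist_comm, edist_dist, Real.dist_eq]
  calc ENNReal.ofReal |r.1 + (a * t₁ + b * t₂) * r.2 - (q.1 + (a * t₁ + b * t₂) * q.2)|
    _ = ENNReal.ofReal |a * (r.1 + t₁ * r.2 - (q.1 + t₁ * q.2)) +
          b * (r.1 + t₂ * r.2 - (q.1 + t₂ * q.2))| := by
        congr 2
        linear_combination (q.1 - r.1) * hab
    _ ≤ ENNReal.ofReal (a * |r.1 + t₁ * r.2 - (q.1 + t₁ * q.2)| +
          b * |r.1 + t₂ * r.2 - (q.1 + t₂ * q.2)|) := by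
        gcongr
        refine (abs_add_le _ _).trans_eq ?_
        rw [abs_mul, abs_mul, abs_of_nonneg ha, abs_of_nonneg hb]
    _ ≤ _ := by
        refine ENNReal.ofReal_add_le.trans ?_
        rw [ENNReal.ofReal_mul ha, ENNReal.ofReal_mul hb]
        gcongr <;>
          exact ofReal_abs_sub_le_volume_of_convex (hconv _) (mem_image_of_mem _ hq)
            (mem_image_of_mem _ hr)

variable (F) in
/-- The projection of `F × (ℝ × ℝ)` onto `F × ℝ` along the direction `(0, (-t, 1))`. The images of
a fixed convex set under `shadow F t`, as `t` varies, form a shadow system in the direction of the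
second factor. -/
def shadow (t : ℝ) : F × (ℝ × ℝ) →L[ℝ] F × ℝ :=
  (ContinuousLinearMap.id ℝ F).prodMap
    (ContinuousLinearMap.fst ℝ ℝ ℝ + t • ContinuousLinearMap.snd ℝ ℝ ℝ)

theorem shadow_apply (t : ℝ) (x : F × (ℝ × ℝ)) : shadow F t x = (x.1, x.2.1 + t * x.2.2) := rfl

theorem prodMk_preimage_shadow_image (t : ℝ) (H : Set (F × (ℝ × ℝ))) (s : F) :
    Prod.mk s ⁻¹' (shadow F t '' H) = (fun q => q.1 + t * q.2) '' (Prod.mk s ⁻¹' H) := by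
  ext r
  constructor
  · rintro ⟨⟨s', q⟩, hq, hr⟩
    rw [shadow_apply, Prod.mk.injEq] at hr
    exact ⟨q, hr.1 ▸ hq, hr.2⟩
  · rintro ⟨q, hq, rfl⟩
    exact ⟨(s, q), hq, rfl⟩

variable [MeasurableSpace F] [BorelSpace F]

theorem measure_shadow_image_le (μ : Measure F) [SFinite μ] {H : Set (F × (ℝ × ℝ))}
    (hcompact : IsCompact H) (hconv : Convex ℝ H) {a b : ℝ} (ha : 0 ≤ a) (hb : 0 ≤ b)
    (hab : a + b = 1) (t₁ t₂ : ℝ) :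
    μ.prod volume (shadow F (a * t₁ + b * t₂) '' H) ≤
      ENNReal.ofReal a * μ.prod volume (shadow F t₁ '' H) +
        ENNReal.ofReal b * μ.prod volume (shadow F t₂ '' H) := by
  have hmeas (t : ℝ) : MeasurableSet (shadow F t '' H) :=
    (hcompact.image (shadow F t).continuous).measurableSet
  have hslice (t : ℝ) := measurable_measure_prodMk_left (ν := volume) (hmeas t)
  rw [Measure.prod_apply (hmeas _), Measure.prod_apply (hmeas _), Measure.prod_apply (hmeas _),
    ← lintegral_const_mul _ (hslice t₁), ← lintegral_const_mul _ (hslice t₂),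
    ← lintegral_add_left ((hslice t₁).const_mul _)]
  simp only [prodMk_preimage_shadow_image]
  refine lintegral_mono fun s => volume_image_fst_add_mul_snd_le ?_ ha hb hab t₁ t₂
  exact hconv.affine_preimage (AffineMap.const ℝ (ℝ × ℝ) s |>.prod (AffineMap.id ℝ (ℝ × ℝ)))

theorem convexOn_measureReal_shadow_image (μ : Measure F) [SFinite μ] [IsFiniteMeasureOnCompacts μ]
    {H : Set (F × (ℝ × ℝ))} (hcompact : IsCompact H) (hconv : Convex ℝ H) :
    ConvexOn ℝ univ fun t => (μ.prod volume).real (shadow F t '' H) := by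
  refine ⟨convex_univ, fun t₁ _ t₂ _ a b ha hb hab => ?_⟩
  have hfin (t : ℝ) : μ.prod volume (shadow F t '' H) ≠ ⊤ :=
    (hcompact.image (shadow F t).continuous).measure_ne_top
  have h₁ := ENNReal.mul_ne_top ENNReal.ofReal_ne_top (hfin t₁) (a := ENNReal.ofReal a)
  have h₂ := ENNReal.mul_ne_top ENNReal.ofReal_ne_top (hfin t₂) (a := ENNReal.ofReal b)
  have hle := ENNReal.toReal_mono (ENNReal.add_ne_top.2 ⟨h₁, h₂⟩)
    (measure_shadow_image_le μ hcompact hconv ha hb hab t₁ t₂)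
  rwa [ENNReal.toReal_add h₁ h₂, ENNReal.toReal_mul, ENNReal.toReal_mul, ENNReal.toReal_ofReal ha,
    ENNReal.toReal_ofReal hb] at hle

end ShadowSystem

section Shear

variable {F : Type*} [TopologicalSpace F]

/-- The shear of `F × ℝ` moving the line over `s : F` by `t * β s`: at time `t`, the parallel chord
movement with speed function `β`. -/
def shear (β : C(F, ℝ)) (t : ℝ) : F × ℝ ≃ₜ F × ℝ where
  toFun x := (x.1, x.2 + t * β x.1)
  invFun x := (x.1, x.2 - t * β x.1)
  left_inv x := by simp
  right_inv x := by simp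

@[simp]
theorem shear_apply (β : C(F, ℝ)) (t : ℝ) (x : F × ℝ) :
    shear β t x = (x.1, x.2 + t * β x.1) := rfl

theorem shear_zero (β : C(F, ℝ)) : shear β 0 = Homeomorph.refl (F × ℝ) := by
  ext x <;> simp

theorem measurePreserving_shear [MeasurableSpace F] [BorelSpace F] (μ : Measure F) [SFinite μ]
    (β : C(F, ℝ)) (t : ℝ) :
    MeasurePreserving (shear β t) (μ.prod volume) (μ.prod volume) :=
  (MeasurePreserving.id μ).skew_product (g := fun s r => r + t * β s)
    (by unfold Function.uncurry; fun_prop)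
    (Filter.Eventually.of_forall fun s => map_add_right_eq_self volume (t * β s))

theorem absConvexHull_range_shear_comp {ι F : Type*} [NormedAddCommGroup F] [NormedSpace ℝ F]
    (β : C(F, ℝ)) (t : ℝ) (x : ι → F × ℝ) :
    absConvexHull ℝ (range (shear β t ∘ x)) =
      shadow F t '' absConvexHull ℝ (range fun i => ((x i).1, ((x i).2, β (x i).1))) := by
  have hlift : shear β t ∘ x = shadow F t ∘ fun i => ((x i).1, ((x i).2, β (x i).1)) := rfl
  rw [hlift, range_comp]
  exact absConvexHull_image (shadow F t : F × (ℝ × ℝ) →ₗ[ℝ] F × ℝ) _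

end Shear

section ShearMoment

variable {ι : Type*} {F : Type*} [NormedAddCommGroup F] [NormedSpace ℝ F]
  [FiniteDimensional ℝ F] [MeasurableSpace F] [BorelSpace F] (μ : Measure F)
  [IsFiniteMeasureOnCompacts μ] (β : C(F, ℝ)) {K : Set (F × ℝ)} {p : ℝ}

theorem convexOn_measureReal_absConvexHull_range_shear [Finite ι] (x : ι → F × ℝ) :
    ConvexOn ℝ univ fun t => (μ.prod volume).real (absConvexHull ℝ (range (shear β t ∘ x))) := by
  simp only [absConvexHull_range_shear_comp]
  exact convexOn_measureReal_shadow_image μ (isCompact_absConvexHull_of_finite (finite_range _))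
    convex_absConvexHull

variable [Fintype ι]

theorem symHullMoment_shear_image (t : ℝ) (p : ℝ) (K : Set (F × ℝ)) :
    symHullMoment ι (μ.prod volume) p (shear β t '' K) =
      (∫ x in univ.pi fun _ : ι => K, ((μ.prod volume).real (absConvexHull ℝ
        (range (shear β t ∘ x))) / (μ.prod volume).real K) ^ p ∂Measure.pi fun _ => μ.prod volume) /
        (μ.prod volume).real K ^ Fintype.card ι := by
  have hpres := measurePreserving_shear μ β t
  have himage : (μ.prod volume).real (shear β t '' K) = (μ.prod volume).real K := by
    rw [Measure.real, ← hpres.measure_preimage_emb (shear β t).measurableEmbedding,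
      (shear β t).injective.preimage_image, Measure.real]
  rw [symHullMoment, himage, setIntegral_pi_image_homeomorph hpres]

theorem convexOn_symHullMoment_shear_image (hK : IsCompact K) (hp : 1 ≤ p) :
    ConvexOn ℝ univ fun t => symHullMoment ι (μ.prod volume) p (shear β t '' K) := by
  simp only [symHullMoment_shear_image, div_eq_inv_mul]
  refine ConvexOn.smul (by positivity) (convexOn_integral convex_univ (fun x => ?_) fun t _ => ?_)
  · refine convexOn_comp_rpow ?_ (fun t _ => by positivity) hp
    exact (convexOn_measureReal_absConvexHull_range_shear μ β x).smul (by positivity)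
  · simp only [← div_eq_inv_mul]
    exact integrableOn_measureReal_absConvexHull_range_rpow _ hK (shear β t).continuous _
      (zero_le_one.trans hp)

theorem symHullMoment_le_max_shear_image (hK : IsCompact K) (hp : 1 ≤ p) {t₁ t₂ : ℝ} (h₁ : t₁ ≤ 0)
    (h₂ : 0 ≤ t₂) :
    symHullMoment ι (μ.prod volume) p K ≤
      max (symHullMoment ι (μ.prod volume) p (shear β t₁ '' K))
        (symHullMoment ι (μ.prod volume) p (shear β t₂ '' K)) := by
  simpa [shear_zero] using (convexOn_symHullMoment_shear_image (ι := ι) μ β hK hp).le_max_of_mem_Icc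
    (mem_univ t₁) (mem_univ t₂) ⟨h₁, h₂⟩

end ShearMoment

section Approximation

open Filter Topology

theorem exists_monotone_finite_subset_closure_iUnion {X : Type*} [PseudoEMetricSpace X] {s : Set X}
    (hs : TopologicalSpace.IsSeparable s) :
    ∃ F : ℕ → Set X, Monotone F ∧ (∀ k, (F k).Finite) ∧ (∀ k, F k ⊆ s) ∧
      s ⊆ closure (⋃ k, F k) := by
  obtain ⟨D, hDs, hD, hsD⟩ := hs.exists_countable_dense_subset
  obtain rfl | hne := D.eq_empty_or_nonempty
  · exact ⟨fun _ => ∅, monotone_const, fun _ => finite_empty, fun _ => empty_subset s,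
      by simpa using hsD⟩
  obtain ⟨d, rfl⟩ := hD.exists_eq_range hne
  refine ⟨fun k => d '' Iio k, fun i j hij => image_mono (Iio_subset_Iio hij),
    fun k => (finite_Iio k).image d, fun k => (image_subset_range d _).trans hDs, ?_⟩
  rwa [← image_iUnion, iUnion_Iio, image_univ]

theorem tendsto_setIntegral_univ_pi_of_monotone {ι X : Type*} [Fintype ι] [MeasurableSpace X]
    {μ : Measure X} [SigmaFinite μ] {P : ℕ → Set X} {K : Set X} (hP : Monotone P)
    (hPm : ∀ k, MeasurableSet (P k)) (hPK : (⋃ k, P k) =ᵐ[μ] K) {f : (ι → X) → ℝ}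
    (hf : IntegrableOn f (univ.pi fun _ => K) (Measure.pi fun _ => μ)) :
    Tendsto (fun k => ∫ x in univ.pi fun _ => P k, f x ∂Measure.pi fun _ => μ) atTop
      (𝓝 (∫ x in univ.pi fun _ => K, f x ∂Measure.pi fun _ => μ)) := by
  have hunion : ⋃ k, univ.pi (fun _ : ι => P k) = univ.pi fun _ => ⋃ k, P k :=
    iUnion_univ_pi_of_monotone fun _ => hP
  have hae : ⋃ k, univ.pi (fun _ : ι => P k) =ᵐ[Measure.pi fun _ => μ] univ.pi fun _ => K := by
    rw [hunion]
    exact Measure.ae_eq_set_pi fun _ _ => hPK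
  rw [← setIntegral_congr_set hae]
  exact tendsto_setIntegral_of_monotone (fun k => MeasurableSet.univ_pi fun _ => hPm k)
    (fun i j hij => pi_mono fun _ _ => hP hij) (hf.congr_set_ae hae)

variable {V : Type*} [NormedAddCommGroup V] [NormedSpace ℝ V] [FiniteDimensional ℝ V]
  [MeasurableSpace V] [BorelSpace V] (μ : Measure V) [μ.IsAddHaarMeasure] {C K : Set V}

theorem ae_eq_of_convex_of_subset_closure (hC : Convex ℝ C) (hCK : C ⊆ K) (hKC : K ⊆ closure C) :
    C =ᵐ[μ] K := by
  have hfrontier : (C ∪ frontier C : Set V) ≤ᵐ[μ] C :=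
    ae_le_set.2 <| measure_mono_null (union_sdiff_left.trans_subset sdiff_subset)
      (hC.addHaar_frontier μ)
  refine hCK.eventuallyLE.antisymm ((?_ : K ⊆ _).eventuallyLE.trans hfrontier)
  rwa [← closure_eq_self_union_frontier]

variable {ι : Type*} [Fintype ι] {p : ℝ}

theorem tendsto_symHullMoment_of_monotone {P : ℕ → Set V} (hP : Monotone P)
    (hPm : ∀ k, MeasurableSet (P k)) (hPK : (⋃ k, P k) =ᵐ[μ] K) (hK : IsCompact K)
    (hK0 : μ K ≠ 0) (hp : 0 ≤ p) :
    Tendsto (fun k => symHullMoment ι μ p (P k)) atTop (𝓝 (symHullMoment ι μ p K)) := by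
  have hfactor (A : Set V) : symHullMoment ι μ p A =
      (∫ x in univ.pi fun _ : ι => A, μ.real (absConvexHull ℝ (range x)) ^ p
        ∂Measure.pi fun _ => μ) / μ.real A ^ p / μ.real A ^ Fintype.card ι := by
    simp only [symHullMoment, Real.div_rpow measureReal_nonneg measureReal_nonneg, integral_div]
  have hKpos : 0 < μ.real K := ENNReal.toReal_pos hK0 hK.measure_ne_top
  have hmeasure : Tendsto (fun k => μ.real (P k)) atTop (𝓝 (μ.real K)) := by
    have hunion := tendsto_measure_iUnion_atTop (μ := μ) hP
    rw [measure_congr hPK] at hunion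
    exact (ENNReal.tendsto_toReal hK.measure_ne_top).comp hunion
  have hintegral := tendsto_setIntegral_univ_pi_of_monotone (ι := ι) hP hPm hPK <| by
    simpa using integrableOn_measureReal_absConvexHull_range_rpow μ hK continuous_id 1 hp
  simp only [hfactor]
  exact (hintegral.div (hmeasure.rpow_const (Or.inl hKpos.ne')) (by positivity)).div
    (hmeasure.pow _) (by positivity)

theorem symHullMoment_le_of_forall_finite (hK : IsCompact K) (hKabs : AbsConvex ℝ K)
    (hK0 : μ K ≠ 0) (hp : 0 ≤ p) {m : ℝ}
    (hm : ∀ X : Set V, X.Finite → symHullMoment ι μ p (absConvexHull ℝ X) ≤ m) :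
    symHullMoment ι μ p K ≤ m := by
  obtain ⟨F, hFmono, hFfin, hFK, hKF⟩ :=
    exists_monotone_finite_subset_closure_iUnion (TopologicalSpace.IsSeparable.of_separableSpace K)
  have hPmono : Monotone fun k => absConvexHull ℝ (F k) := (absConvexHull ℝ).monotone.comp hFmono
  have hPK : (⋃ k, absConvexHull ℝ (F k)) =ᵐ[μ] K := by
    refine ae_eq_of_convex_of_subset_closure μ
      (hPmono.directed_le.convex_iUnion fun k => convex_absConvexHull)
      (iUnion_subset fun k => absConvexHull_min (hFK k) hKabs)
      (hKF.trans (closure_mono (iUnion_mono fun k => subset_absConvexHull)))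
  refine le_of_tendsto' (tendsto_symHullMoment_of_monotone μ hPmono (fun k => ?_) hPK hK hK0 hp)
    fun k => hm (F k) (hFfin k)
  exact (isCompact_absConvexHull_of_finite (hFfin k)).measurableSet

end Approximation

section Apex

/-- The region at abscissa at most `S` between the two lines joining the apex `(S, y)` to the
points `(1, 1)` and `(1, -1)`. -/
def apexCone (S y : ℝ) : Set (ℝ × ℝ) := {x | |(S - 1) * x.2 - y * (x.1 - 1)| ≤ S - x.1}

/-- The triangle with vertices `(S, y)`, `(1, 1)` and `(1, -1)`. -/
def apexTriangle (S y : ℝ) : Set (ℝ × ℝ) := {x ∈ apexCone S y | 1 ≤ x.1}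

/-- The points that may be present besides the vertices `±(S, y)` of a symmetric polygon in which
the neighbours of `(S, y)` are `(1, 1)` and `(1, -1)`. -/
def capRegion (S y : ℝ) : Set (ℝ × ℝ) := {x | |x.1| ≤ 1 ∧ x ∈ apexCone S y ∧ -x ∈ apexCone S y}

variable {S y t σ : ℝ} {x : ℝ × ℝ} {Q U : Set (ℝ × ℝ)}

theorem mem_apexCone_iff (hσ : σ = 1 ∨ σ = -1) :
    x ∈ apexCone S y ↔ σ * ((S - 1) * x.2 - y * (x.1 - 1)) ≤ S - x.1 ∧
      -(σ * ((S - 1) * x.2 - y * (x.1 - 1))) ≤ S - x.1 := by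
  have habs : |(S - 1) * x.2 - y * (x.1 - 1)| = |σ * ((S - 1) * x.2 - y * (x.1 - 1))| := by
    rcases hσ with rfl | rfl <;> simp [abs_sub_comm]
  rw [apexCone, mem_ofPred_eq, habs, abs_le', and_comm, and_comm]

theorem apex_mem_apexCone (S y : ℝ) : (S, y) ∈ apexCone S y := by simp [apexCone, mul_comm]

theorem convex_apexCone (S y : ℝ) : Convex ℝ (apexCone S y) := by
  intro x hx z hz a b ha hb hab
  obtain ⟨hx₁, hx₂⟩ := (mem_apexCone_iff (Or.inl rfl)).1 hx
  obtain ⟨hz₁, hz₂⟩ := (mem_apexCone_iff (Or.inl rfl)).1 hz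
  obtain rfl : b = 1 - a := by linarith
  rw [mem_apexCone_iff (Or.inl rfl)]
  simp only [Prod.fst_add, Prod.snd_add, Prod.smul_fst, Prod.smul_snd, smul_eq_mul]
  constructor <;> nlinarith

theorem absConvex_capRegion (S y : ℝ) : AbsConvex ℝ (capRegion S y) := by
  have hconvex : Convex ℝ (capRegion S y) := by
    have hstrip : Convex ℝ {x : ℝ × ℝ | |x.1| ≤ 1} := by
      simp only [abs_le]
      exact (convex_Icc (-1 : ℝ) 1).linear_preimage (LinearMap.fst ℝ ℝ ℝ)
    exact hstrip.inter ((convex_apexCone S y).inter (convex_apexCone S y).neg)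
  refine ⟨(balanced_iff_neg_mem hconvex).2 fun x hx => ?_, hconvex⟩
  simpa only [capRegion, mem_ofPred_eq, Prod.fst_neg, abs_neg, neg_neg, and_comm (a := -x ∈ _)]
    using hx

theorem apexTriangle_subset (hS : 1 < S) (hQ : Convex ℝ Q) (hapex : (S, y) ∈ Q)
    (hupper : (1, 1) ∈ Q) (hlower : (1, -1) ∈ Q) : apexTriangle S y ⊆ Q := by
  rintro x ⟨hx, hx1⟩
  obtain ⟨habove, hbelow⟩ := (mem_apexCone_iff (Or.inl rfl)).1 hx
  have hS' : 0 < S - 1 := sub_pos.2 hS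
  have hsum := hQ.sum_mem (t := Finset.univ) (z := ![(S, y), (1, 1), (1, -1)])
    (w := ![(x.1 - 1) / (S - 1), (S - x.1 + ((S - 1) * x.2 - y * (x.1 - 1))) / (2 * (S - 1)),
      (S - x.1 - ((S - 1) * x.2 - y * (x.1 - 1))) / (2 * (S - 1))])
    (by
      simp only [Finset.mem_univ, forall_const, Fin.forall_fin_succ]
      exact ⟨div_nonneg (by linarith) hS'.le, div_nonneg (by linarith) (by linarith),
        div_nonneg (by linarith) (by linarith), fun i => i.elim0⟩)
    (by simp [Fin.sum_univ_three]; field_simp; ring)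
    (by simp [Fin.forall_fin_succ, *])
  convert hsum
  ext <;> simp [Fin.sum_univ_three] <;> field_simp <;> ring

theorem mem_of_mem_apexCone_of_fst_eq_one (hS : 1 < S) (hQ : Convex ℝ Q) (hupper : (1, 1) ∈ Q)
    (hlower : (1, -1) ∈ Q) (hx : x ∈ apexCone S y) (hx1 : x.1 = 1) : x ∈ Q := by
  obtain ⟨habove, hbelow⟩ := (mem_apexCone_iff (Or.inl rfl)).1 hx
  rw [hx1] at habove hbelow
  have hle : x.2 ≤ 1 := by nlinarith
  have hge : -1 ≤ x.2 := by nlinarith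
  convert hQ hupper hlower (a := (1 + x.2) / 2) (b := (1 - x.2) / 2) (by linarith) (by linarith)
    (by ring)
  ext <;> simp [hx1] <;> ring

theorem convexHull_insert_apex_subset (hS : 1 < S) (hQ : Convex ℝ Q) (hupper : (1, 1) ∈ Q)
    (hlower : (1, -1) ∈ Q) (hcap : Q ⊆ capRegion S y) :
    convexHull ℝ (insert (S, y) Q) ⊆ Q ∪ apexTriangle S y := by
  intro x hx
  rw [convexHull_insert ⟨_, hupper⟩, hQ.convexHull_eq] at hx
  obtain ⟨_, rfl, q, hq, a, b, ha, hb, hab, rfl⟩ := mem_convexJoin.1 hx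
  obtain ⟨hq1, hqcone, -⟩ := hcap hq
  obtain hge | hlt := le_or_gt 1 (a • (S, y) + b • q).1
  · exact Or.inr ⟨convex_apexCone S y (apex_mem_apexCone S y) hqcone ha hb hab, hge⟩
  refine Or.inl ?_
  simp only [Prod.fst_add, Prod.smul_fst, smul_eq_mul] at hlt
  obtain rfl : b = 1 - a := by linarith
  have hq1' : 0 < 1 - q.1 := by nlinarith [(abs_le.1 hq1).2]
  have hSq : 0 < S - q.1 := by linarith
  set c : ℝ × ℝ := ((1 - q.1) / (S - q.1)) • (S, y) + ((S - 1) / (S - q.1)) • q with hc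
  have hcQ : c ∈ Q := by
    refine mem_of_mem_apexCone_of_fst_eq_one hS hQ hupper hlower
      (convex_apexCone S y (apex_mem_apexCone S y) hqcone (by positivity)
        (div_nonneg (by linarith) hSq.le) (by field_simp; ring)) ?_
    simp only [hc, Prod.fst_add, Prod.smul_fst, smul_eq_mul]
    field_simp
    ring
  have hcross : a • (S, y) + (1 - a) • q =
      (a * (S - q.1) / (1 - q.1)) • c + (1 - a * (S - q.1) / (1 - q.1)) • q := by
    rw [hc]
    ext <;> simp <;> field_simp <;> ring
  rw [hcross]
  refine hQ hcQ hq (by positivity) ?_ (by ring)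
  rw [sub_nonneg, div_le_one hq1']
  linarith

theorem absConvexHull_insert_apex (hS : 1 < S) (hQ : AbsConvex ℝ Q) (hupper : (1, 1) ∈ Q)
    (hlower : (1, -1) ∈ Q) (hcap : Q ⊆ capRegion S y) :
    absConvexHull ℝ (insert (S, y) Q) = Q ∪ (apexTriangle S y ∪ -apexTriangle S y) := by
  have hsub := convexHull_insert_apex_subset hS hQ.2 hupper hlower hcap
  have hQhull : Q ⊆ absConvexHull ℝ (insert (S, y) Q) :=
    (subset_insert _ _).trans subset_absConvexHull
  have htriangle : apexTriangle S y ⊆ absConvexHull ℝ (insert (S, y) Q) :=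
    apexTriangle_subset hS convex_absConvexHull (subset_absConvexHull (mem_insert _ _))
      (hQhull hupper) (hQhull hlower)
  refine Subset.antisymm ?_ (union_subset hQhull (union_subset htriangle fun x hx => ?_))
  · refine (absConvexHull_insert_subset hQ ⟨_, hupper⟩ (S, y)).trans (union_subset ?_ ?_)
    · exact hsub.trans (union_subset_union_right _ subset_union_left)
    · intro x hx
      obtain hx | hx := hsub hx
      · exact Or.inl (by simpa using hQ.1.neg_mem_iff.2 hx)
      · exact Or.inr (Or.inr hx)
  · exact balanced_absConvexHull.neg_mem_iff.1 (htriangle hx)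

/-- The speed of the shear that moves the apex `(S, y)` vertically at unit speed: it vanishes on
`[-1, 1]` and is affine on the two outer half-lines. -/
def apexSpeed (S : ℝ) : C(ℝ, ℝ) where
  toFun s := (max (s - 1) 0 - max (-s - 1) 0) / (S - 1)

theorem apexSpeed_of_abs_le {s : ℝ} (hs : |s| ≤ 1) : apexSpeed S s = 0 := by
  obtain ⟨hge, hle⟩ := abs_le.1 hs
  simp [apexSpeed, max_eq_right (sub_nonpos.2 hle), max_eq_right (by linarith : -s - 1 ≤ 0)]

theorem apexSpeed_of_one_le {s : ℝ} (hs : 1 ≤ s) : apexSpeed S s = (s - 1) / (S - 1) := by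
  simp [apexSpeed, max_eq_left (sub_nonneg.2 hs), max_eq_right (by linarith : -s - 1 ≤ 0)]

theorem apexSpeed_neg (S s : ℝ) : apexSpeed S (-s) = -apexSpeed S s := by
  simp only [apexSpeed, ContinuousMap.coe_mk, neg_neg]
  ring

theorem shear_apexSpeed_neg (S t : ℝ) (x : ℝ × ℝ) :
    shear (apexSpeed S) t (-x) = -shear (apexSpeed S) t x := by
  ext <;> simp [apexSpeed_neg]; ring

theorem shear_apexSpeed_mem_apexTriangle_iff (hS : 1 < S) :
    shear (apexSpeed S) t x ∈ apexTriangle S (y + t) ↔ x ∈ apexTriangle S y := by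
  have hS' : S - 1 ≠ 0 := (sub_pos.2 hS).ne'
  simp only [apexTriangle, apexCone, shear_apply, mem_ofPred_eq]
  refine and_congr_left fun hx1 => ?_
  rw [apexSpeed_of_one_le hx1]
  congr! 2
  field_simp
  ring

theorem shear_image_absConvexHull_insert_apex (hS : 1 < S) (hupper : (1, 1) ∈ absConvexHull ℝ U)
    (hlower : (1, -1) ∈ absConvexHull ℝ U) (hcap : U ⊆ capRegion S y)
    (hcap' : U ⊆ capRegion S (y + t)) :
    shear (apexSpeed S) t '' absConvexHull ℝ (insert (S, y) U) =
      absConvexHull ℝ (insert (S, y + t) U) := by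
  have hhull := absConvexHull_min hcap (absConvex_capRegion S y)
  have hhull' := absConvexHull_min hcap' (absConvex_capRegion S (y + t))
  rw [← absConvexHull_insert_absConvexHull (S, y), ← absConvexHull_insert_absConvexHull (S, y + t),
    absConvexHull_insert_apex hS absConvex_absConvexHull hupper hlower hhull,
    absConvexHull_insert_apex hS absConvex_absConvexHull hupper hlower hhull',
    image_union, image_union]
  have hfix : EqOn (shear (apexSpeed S) t) id (absConvexHull ℝ U) := fun x hx => by
    ext <;> simp [apexSpeed_of_abs_le (hhull hx).1]
  have htriangle : apexTriangle S y = shear (apexSpeed S) t ⁻¹' apexTriangle S (y + t) :=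
    Set.ext fun x => (shear_apexSpeed_mem_apexTriangle_iff hS).symm
  have htriangle' : -apexTriangle S y = shear (apexSpeed S) t ⁻¹' (-apexTriangle S (y + t)) := by
    ext x
    rw [mem_preimage, mem_neg, mem_neg, ← shear_apexSpeed_neg,
      shear_apexSpeed_mem_apexTriangle_iff hS]
  rw [hfix.image_eq, image_id, htriangle', htriangle, Homeomorph.image_preimage,
    Homeomorph.image_preimage]

end Apex

section MoveApex

variable {S y t σ : ℝ} {w : ℝ × ℝ} {U : Set (ℝ × ℝ)}

theorem union_neg_subset_capRegion (hcap : U ⊆ capRegion S y) : U ∪ -U ⊆ capRegion S y :=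
  union_subset hcap fun _ hz => (absConvex_capRegion S y).1.neg_mem_iff.1 (hcap hz)

theorem subset_capRegion_add (hσ : σ = 1 ∨ σ = -1) (hS : 1 < S) (hcap : U ⊆ capRegion S y)
    (ht : 0 ≤ σ * t) (hyt : σ * (y + t) ≤ 1)
    (hline : ∀ z ∈ U ∪ -U, z.1 < 1 → z ≠ -(1, σ) →
      σ * ((S - 1) * z.2 - (y + t) * (z.1 - 1)) ≤ S - z.1) :
    U ⊆ capRegion S (y + t) := by
  suffices hcone : ∀ z ∈ U ∪ -U, z ∈ apexCone S (y + t) from fun z hz =>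
    ⟨(hcap hz).1, hcone z (Or.inl hz), hcone (-z) (Or.inr (by simpa using hz))⟩
  intro z hz
  obtain ⟨hz1, hzcone, -⟩ := union_neg_subset_capRegion hcap hz
  obtain ⟨hσside, hother⟩ := (mem_apexCone_iff hσ).1 hzcone
  have hle : z.1 ≤ 1 := (abs_le.1 hz1).2
  refine (mem_apexCone_iff hσ).2 ⟨?_, by nlinarith⟩
  by_cases hzne : z = -(1, σ)
  · simp only [hzne, Prod.fst_neg, Prod.snd_neg]
    nlinarith [mul_self_eq_one_iff.2 hσ]
  obtain hlt | heq := hle.lt_or_eq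
  · exact hline z hz hlt hzne
  · simpa [heq] using hσside

theorem exists_subset_capRegion_touching_line (hσ : σ = 1 ∨ σ = -1) (hS : 1 < S) (hU : U.Finite)
    (hcap : U ⊆ capRegion S y) (hopp : (-1, σ) ∈ U ∪ -U) :
    ∃ t, 0 ≤ σ * t ∧ U ⊆ capRegion S (y + t) ∧ ∃ w ∈ U ∪ -U, w.1 < 1 ∧ w ≠ -(1, σ) ∧
      σ * ((S - 1) * w.2 - (y + t) * (w.1 - 1)) = S - w.1 := by
  -- The line through `(1, σ)` and the moving apex hits `z` when the apex is at `σ * height z`.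
  let height (z : ℝ × ℝ) : ℝ := (S - z.1 - (S - 1) * (σ * z.2)) / (1 - z.1)
  have hσσ : σ * σ = 1 := mul_self_eq_one_iff.2 hσ
  have hopp' : (-1, σ) ∈ {z ∈ U ∪ -U | z.1 < 1 ∧ z ≠ -(1, σ)} := by
    refine ⟨hopp, by norm_num, fun h => ?_⟩
    have hσneg : σ = -σ := congr_arg Prod.snd h
    nlinarith
  obtain ⟨w, ⟨hw, hw1, hwne⟩, hmin⟩ :=
    exists_min_image _ height ((hU.union hU.neg).sep _) ⟨_, hopp'⟩
  have hw1' : 0 < 1 - w.1 := sub_pos.2 hw1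
  have hwcone := ((mem_apexCone_iff hσ).1 (union_neg_subset_capRegion hcap hw).2.1).1
  have hy : σ * y ≤ height w := by
    rw [le_div_iff₀ hw1']
    linarith
  have hm : height w ≤ 1 := by
    refine (hmin _ hopp').trans_eq ?_
    simp only [height, hσσ]
    ring
  have hsubst (z : ℝ × ℝ) : σ * ((S - 1) * z.2 - (y + (σ * height w - y)) * (z.1 - 1)) =
      (S - 1) * (σ * z.2) + height w * (1 - z.1) := by
    linear_combination height w * (1 - z.1) * hσσ
  have ht : 0 ≤ σ * (σ * height w - y) := by
    rw [mul_sub, ← mul_assoc, hσσ]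
    linarith
  refine ⟨σ * height w - y, ht, ?_, w, hw, hw1, hwne, ?_⟩
  · refine subset_capRegion_add hσ hS hcap ht ?_ fun z hz hz1 hzne => ?_
    · rwa [add_sub_cancel, ← mul_assoc, hσσ, one_mul]
    · have hle := hmin z ⟨hz, hz1, hzne⟩
      rw [le_div_iff₀ (sub_pos.2 hz1)] at hle
      rw [hsubst]
      linarith
  · rw [hsubst, div_mul_cancel₀ _ hw1'.ne']
    ring

theorem one_mk_mem_of_apex_collinear (hσ : σ = 1 ∨ σ = -1) (hS : 1 < S) {s : Set (ℝ × ℝ)}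
    (hs : Convex ℝ s) (hw : w ∈ s) (hapex : (S, y) ∈ s) (hw1 : w.1 < 1)
    (hline : σ * ((S - 1) * w.2 - y * (w.1 - 1)) = S - w.1) : (1, σ) ∈ s := by
  have hpos : 0 < S - w.1 := by linarith
  have hσσ : σ * σ = 1 := mul_self_eq_one_iff.2 hσ
  have hcomb : ((1, σ) : ℝ × ℝ) =
      ((S - 1) / (S - w.1)) • w + ((1 - w.1) / (S - w.1)) • (S, y) := by
    ext
    · simp only [Prod.fst_add, Prod.smul_fst, smul_eq_mul]
      field_simp
      ring
    · simp only [Prod.snd_add, Prod.smul_snd, smul_eq_mul]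
      field_simp
      linear_combination ((S - 1) * w.2 - y * (w.1 - 1)) * hσσ - σ * hline
  rw [hcomb]
  exact hs hw hapex (div_nonneg (by linarith) hpos.le) (div_nonneg (by linarith) hpos.le)
    (by field_simp; ring)

theorem absConvexHull_insert_apex_diff (hσ : σ = 1 ∨ σ = -1) (hS : 1 < S) (hw : w ∈ U ∪ -U)
    (hw1 : w.1 < 1) (hwne : w ≠ -(1, σ)) (hline : σ * ((S - 1) * w.2 - y * (w.1 - 1)) = S - w.1) :
    absConvexHull ℝ (insert (S, y) (U \ {(1, σ), -(1, σ)})) =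
      absConvexHull ℝ (insert (S, y) U) := by
  set H := absConvexHull ℝ (insert (S, y) (U \ {(1, σ), -(1, σ)}))
  have hbal : Balanced ℝ H := balanced_absConvexHull
  have hkept : ∀ z ∈ U ∪ -U, z ≠ (1, σ) → z ≠ -(1, σ) → z ∈ H := fun z hz hz₁ hz₂ =>
    (absConvexHull ℝ).monotone (subset_insert _ _) (mem_absConvexHull_diff_pair hz hz₁ hz₂)
  have hwH : w ∈ H := hkept w hw (fun h => by simp [h] at hw1) hwne
  have hvertex : (1, σ) ∈ H := one_mk_mem_of_apex_collinear hσ hS convex_absConvexHull hwH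
    (subset_absConvexHull (mem_insert _ _)) hw1 hline
  refine Subset.antisymm ((absConvexHull ℝ).monotone (insert_subset_insert sdiff_subset))
    (absConvexHull_min (insert_subset (subset_absConvexHull (mem_insert _ _)) fun z hz => ?_)
      absConvex_absConvexHull)
  by_cases hz₁ : z = (1, σ)
  · rwa [hz₁]
  by_cases hz₂ : z = -(1, σ)
  · rwa [hz₂, hbal.neg_mem_iff]
  · exact hkept z (Or.inl hz) hz₁ hz₂

theorem ncard_insert_diff_lt {α : Type*} {s r : Set α} {a b c : α} (hs : s.Finite) (ha : a ∉ s)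
    (hc : c ∈ s) (hcr : c ∈ r) : (insert b (s \ r)).ncard < (insert a s).ncard := by
  rw [ncard_insert_of_notMem ha hs]
  refine (ncard_insert_le _ _).trans_lt (Nat.succ_lt_succ (ncard_lt_ncard ?_ hs))
  exact sdiff_subset.ssubset_of_mem_notMem hc fun h => h.2 hcr

theorem exists_shear_image_eq_absConvexHull (hS : 1 < S) (hU : U.Finite)
    (hcap : U ⊆ capRegion S y) (hvertex : ∀ σ : ℝ, σ = 1 ∨ σ = -1 → (1, σ) ∈ U ∪ -U)
    (hσ : σ = 1 ∨ σ = -1) :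
    ∃ t, 0 ≤ σ * t ∧ ∃ Y : Set (ℝ × ℝ), Y.Finite ∧ Y.ncard < (insert (S, y) U).ncard ∧
      shear (apexSpeed S) t '' absConvexHull ℝ (insert (S, y) U) = absConvexHull ℝ Y := by
  have hopp : (-1, σ) ∈ U ∪ -U := by
    simpa [or_comm] using hvertex (-σ) (by rcases hσ with rfl | rfl <;> simp)
  have hhull (σ : ℝ) (hσ : σ = 1 ∨ σ = -1) : (1, σ) ∈ absConvexHull ℝ U :=
    mem_absConvexHull_of_mem_union_neg (hvertex σ hσ)
  obtain ⟨t, ht, hcap', w, hw, hw1, hwne, hline⟩ :=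
    exists_subset_capRegion_touching_line hσ hS hU hcap hopp
  refine ⟨t, ht, insert (S, y + t) (U \ {(1, σ), -(1, σ)}), (hU.sdiff).insert _, ?_, ?_⟩
  · have hapex : (S, y) ∉ U := fun h => absurd (abs_le.1 (hcap h).1).2 (not_le.2 hS)
    exact (hvertex σ hσ).elim (fun h => ncard_insert_diff_lt hU hapex h (by simp))
      fun h => ncard_insert_diff_lt hU hapex h (by simp)
  · rw [absConvexHull_insert_apex_diff hσ hS hw hw1 hwne hline,
      shear_image_absConvexHull_insert_apex hS (hhull 1 (Or.inl rfl)) (hhull (-1) (Or.inr rfl))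
        hcap hcap']

theorem symHullMoment_absConvexHull_insert_apex_le {ι : Type*} [Fintype ι] {p : ℝ} (hp : 1 ≤ p)
    (hS : 1 < S) (hU : U.Finite) (hcap : U ⊆ capRegion S y)
    (hvertex : ∀ σ : ℝ, σ = 1 ∨ σ = -1 → (1, σ) ∈ U ∪ -U) :
    ∃ Y : Set (ℝ × ℝ), Y.Finite ∧ Y.ncard < (insert (S, y) U).ncard ∧
      symHullMoment ι volume p (absConvexHull ℝ (insert (S, y) U)) ≤
        symHullMoment ι volume p (absConvexHull ℝ Y) := by
  obtain ⟨t₁, ht₁, Y₁, hY₁, hcard₁, himage₁⟩ :=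
    exists_shear_image_eq_absConvexHull hS hU hcap hvertex (Or.inr rfl)
  obtain ⟨t₂, ht₂, Y₂, hY₂, hcard₂, himage₂⟩ :=
    exists_shear_image_eq_absConvexHull hS hU hcap hvertex (Or.inl rfl)
  have hmax := symHullMoment_le_max_shear_image (ι := ι) volume (apexSpeed S)
    (isCompact_absConvexHull_of_finite (hU.insert (S, y))) hp (by linarith : t₁ ≤ 0)
    (by linarith : 0 ≤ t₂)
  rw [himage₁, himage₂, ← Measure.volume_eq_prod] at hmax
  obtain hle | hle := le_max_iff.1 hmax
  · exact ⟨Y₁, hY₁, hcard₁, hle⟩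
  · exact ⟨Y₂, hY₂, hcard₂, hle⟩

end MoveApex

section Irredundant

/-- No point of `X` lies in the absolutely convex hull of the others, that is, the points of `X`
are vertices of the symmetric polytope they generate, with one point taken from each antipodal
pair. -/
def IsIrredundant {V : Type*} [AddCommGroup V] [Module ℝ V] (X : Set V) : Prop :=
  ∀ x ∈ X, x ∉ absConvexHull ℝ (X \ {x})

variable {V W : Type*} [AddCommGroup V] [Module ℝ V] [AddCommGroup W] [Module ℝ W] {X : Set V}

theorem IsIrredundant.of_image {f : V →ₗ[ℝ] W} (hf : Function.Injective f)
    (hX : IsIrredundant (f '' X)) : IsIrredundant X := by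
  intro x hx hmem
  refine hX (f x) (mem_image_of_mem f hx) ?_
  rw [← image_singleton, ← image_sdiff hf, absConvexHull_image]
  exact mem_image_of_mem f hmem

theorem IsIrredundant.notMem_absConvexHull_diff_pair (hX : IsIrredundant X) {x : V}
    (hx : x ∈ X ∪ -X) : x ∉ absConvexHull ℝ (X \ {x, -x}) := by
  intro hmem
  obtain hx | hx := hx
  · exact hX x hx ((absConvexHull ℝ).monotone (sdiff_subset_sdiff_right (by simp)) hmem)
  · refine hX (-x) hx ((absConvexHull ℝ).monotone (sdiff_subset_sdiff_right ?_)
      (balanced_absConvexHull.neg_mem_iff.2 hmem))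
    simp

theorem IsIrredundant.smul_ne (hX : IsIrredundant X) {x z : V} (hx : x ∈ X) (hz : z ∈ X)
    (hxz : x ≠ z) (t : ℝ) : t • x ≠ z := by
  rintro rfl
  obtain ht | ht := le_or_gt |t| 1
  · exact hX _ hz (balanced_absConvexHull.smul_mem ht (subset_absConvexHull ⟨hx, hxz⟩))
  · have ht0 : t ≠ 0 := abs_pos.1 (one_pos.trans ht)
    have hinv : |t⁻¹| ≤ 1 := by rw [abs_inv]; exact inv_le_one_of_one_le₀ ht.le
    refine hX x hx ?_
    rw [← inv_smul_smul₀ ht0 x]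
    refine balanced_absConvexHull.smul_mem hinv (subset_absConvexHull ⟨hz, ?_⟩)
    rwa [inv_smul_smul₀ ht0, mem_singleton_iff, eq_comm]

end Irredundant

section PlanarCoordinates

/-- The determinant of the matrix with rows `u` and `w`. -/
def planarDet (u w : ℝ × ℝ) : ℝ := u.1 * w.2 - u.2 * w.1

variable {a b u v w : ℝ × ℝ} {c d : ℝ} {Z : Set (ℝ × ℝ)}

theorem planarDet_smul_add_smul_right (hv : v = c • a + d • b) :
    planarDet v b = c * planarDet a b := by
  simp only [hv, planarDet, Prod.fst_add, Prod.snd_add, Prod.smul_fst, Prod.smul_snd, smul_eq_mul]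
  ring

theorem planarDet_smul_add_smul_left (hv : v = c • a + d • b) :
    planarDet a v = d * planarDet a b := by
  simp only [hv, planarDet, Prod.fst_add, Prod.snd_add, Prod.smul_fst, Prod.smul_snd, smul_eq_mul]
  ring

theorem eq_smul_add_smul_of_planarDet_ne_zero (h : planarDet a b ≠ 0) (v : ℝ × ℝ) :
    v = (planarDet v b / planarDet a b) • a + (planarDet a v / planarDet a b) • b := by
  ext <;> simp only [Prod.fst_add, Prod.snd_add, Prod.smul_fst, Prod.smul_snd, smul_eq_mul] <;>
    field_simp <;> simp only [planarDet] <;> ring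

theorem exists_smul_eq_of_planarDet_eq_zero (hu : u ≠ 0) (h : planarDet u w = 0) :
    ∃ t : ℝ, t • u = w := by
  have hpos : 0 < u.1 ^ 2 + u.2 ^ 2 := by
    contrapose! hu
    ext
    · exact pow_eq_zero_iff two_ne_zero |>.1 (by nlinarith [sq_nonneg u.1, sq_nonneg u.2])
    · exact pow_eq_zero_iff two_ne_zero |>.1 (by nlinarith [sq_nonneg u.1, sq_nonneg u.2])
  rw [planarDet] at h
  refine ⟨(u.1 * w.1 + u.2 * w.2) / (u.1 ^ 2 + u.2 ^ 2), ?_⟩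
  ext
  · simp only [Prod.smul_fst, smul_eq_mul]
    field_simp
    linear_combination u.2 * h
  · simp only [Prod.smul_snd, smul_eq_mul]
    field_simp
    linear_combination -u.1 * h

theorem IsIrredundant.planarDet_ne_zero {X : Set (ℝ × ℝ)} (hX : IsIrredundant X) (hu : u ∈ X)
    (hw : w ∈ X) (huw : u ≠ w) : planarDet u w ≠ 0 := by
  intro hdet
  obtain rfl | hu0 := eq_or_ne u 0
  · exact hX.smul_ne hw hu huw.symm 0 (zero_smul ℝ w)
  · obtain ⟨t, ht⟩ := exists_smul_eq_of_planarDet_eq_zero hu0 hdet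
    exact hX.smul_ne hu hw huw t ht

theorem exists_continuousLinearEquiv_apply_eq (h : planarDet a b ≠ 0) :
    ∃ L : (ℝ × ℝ) ≃L[ℝ] ℝ × ℝ, ∀ x, L x = ((x.1 + x.2) / 2) • a + ((x.1 - x.2) / 2) • b := by
  let f : ℝ × ℝ →ₗ[ℝ] ℝ × ℝ :=
    (((1 / 2 : ℝ) • (LinearMap.fst ℝ ℝ ℝ + LinearMap.snd ℝ ℝ ℝ)).smulRight a +
      ((1 / 2 : ℝ) • (LinearMap.fst ℝ ℝ ℝ - LinearMap.snd ℝ ℝ ℝ)).smulRight b)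
  have hf (x : ℝ × ℝ) : f x = ((x.1 + x.2) / 2) • a + ((x.1 - x.2) / 2) • b := by
    simp [f, div_eq_inv_mul, mul_add, mul_sub]
  have hinj : Function.Injective f := by
    refine (injective_iff_map_eq_zero f).2 fun x hx => ?_
    rw [hf, eq_comm] at hx
    have hsum := planarDet_smul_add_smul_right hx
    have hdiff := planarDet_smul_add_smul_left hx
    simp only [planarDet, Prod.fst_zero, Prod.snd_zero, zero_mul, mul_zero, sub_zero] at hsum hdiff
    have hsum' := (mul_eq_zero.1 hsum.symm).resolve_right h
    have hdiff' := (mul_eq_zero.1 hdiff.symm).resolve_right h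
    ext
    · simp only [Prod.fst_zero]; linarith
    · simp only [Prod.snd_zero]; linarith
  exact ⟨(LinearEquiv.ofInjectiveEndo f hinj).toContinuousLinearEquiv, hf⟩

theorem exists_nonneg_smul_add_smul (hZ : ∀ z ∈ Z, -z ∈ Z) (hu : u ∈ Z) (hw : w ∈ Z)
    (h : planarDet u w ≠ 0) (v : ℝ × ℝ) :
    ∃ a ∈ Z, ∃ b ∈ Z, ∃ c d : ℝ, 0 ≤ c ∧ 0 ≤ d ∧ v = c • a + d • b := by
  have hsign (r : ℝ) {z : ℝ × ℝ} (hz : z ∈ Z) : ∃ z' ∈ Z, r • z = |r| • z' := by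
    obtain hr | hr := abs_cases r
    · exact ⟨z, hz, by rw [hr.1]⟩
    · exact ⟨-z, hZ z hz, by rw [hr.1, smul_neg, neg_smul, neg_neg]⟩
  obtain ⟨a, ha, hau⟩ := hsign (planarDet v w / planarDet u w) hu
  obtain ⟨b, hb, hbw⟩ := hsign (planarDet u v / planarDet u w) hw
  exact ⟨a, ha, b, hb, _, _, abs_nonneg _, abs_nonneg _,
    by rw [← hau, ← hbw]; exact eq_smul_add_smul_of_planarDet_ne_zero h v⟩

theorem exists_min_nonneg_smul_add_smul (hZ : Z.Finite) (hv : ∀ z ∈ Z, planarDet v z ≠ 0)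
    (hex : ∃ a ∈ Z, ∃ b ∈ Z, ∃ c d : ℝ, 0 ≤ c ∧ 0 ≤ d ∧ v = c • a + d • b) :
    ∃ a ∈ Z, ∃ b ∈ Z, ∃ c d : ℝ, 0 ≤ c ∧ 0 ≤ d ∧ v = c • a + d • b ∧
      ∀ a' ∈ Z, ∀ b' ∈ Z, ∀ c' d' : ℝ, 0 ≤ c' → 0 ≤ d' → v = c' • a' + d' • b' →
        c + d ≤ c' + d' := by
  let totals : Set ℝ :=
    {r | ∃ a ∈ Z, ∃ b ∈ Z, ∃ c d : ℝ, 0 ≤ c ∧ 0 ≤ d ∧ v = c • a + d • b ∧ c + d = r}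
  have hfinite : totals.Finite := by
    refine ((hZ.prod hZ).image fun q : (ℝ × ℝ) × (ℝ × ℝ) =>
      planarDet v q.2 / planarDet q.1 q.2 + planarDet q.1 v / planarDet q.1 q.2).subset ?_
    rintro _ ⟨a, ha, b, hb, c, d, -, -, hvab, rfl⟩
    have hab : planarDet a b ≠ 0 := fun h => hv b hb <| by
      rw [planarDet_smul_add_smul_right hvab, h, mul_zero]
    refine ⟨(a, b), ⟨ha, hb⟩, ?_⟩
    simp only [planarDet_smul_add_smul_right hvab, planarDet_smul_add_smul_left hvab,
      mul_div_cancel_right₀ _ hab]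
  obtain ⟨a₀, ha₀, b₀, hb₀, c₀, d₀, hc₀, hd₀, hv₀⟩ := hex
  obtain ⟨_, ⟨a, ha, b, hb, c, d, hc, hd, hvab, rfl⟩, hmin⟩ :=
    exists_min_image totals id hfinite ⟨_, a₀, ha₀, b₀, hb₀, c₀, d₀, hc₀, hd₀, hv₀, rfl⟩
  exact ⟨a, ha, b, hb, c, d, hc, hd, hvab, fun a' ha' b' hb' c' d' hc' hd' hv' =>
    hmin _ ⟨a', ha', b', hb', c', d', hc', hd', hv', rfl⟩⟩

end PlanarCoordinates

section Reduction

variable {S y σ : ℝ} {z : ℝ × ℝ} {U X : Set (ℝ × ℝ)}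

/-- `(S, y)` is a combination of `(1, 1)` and `(1, -1)` with nonnegative coefficients of total `S`,
and no such combination of two points of `U ∪ -U` has a smaller total. -/
structure IsMinimalApex (S y : ℝ) (U : Set (ℝ × ℝ)) : Prop where
  one_mk_mem : ∀ σ : ℝ, σ = 1 ∨ σ = -1 → (1, σ) ∈ U ∪ -U
  mul_lt : ∀ σ : ℝ, σ = 1 ∨ σ = -1 → σ * y < S
  le_add : ∀ a ∈ U ∪ -U, ∀ b ∈ U ∪ -U, ∀ c d : ℝ, 0 ≤ c → 0 ≤ d → (S, y) = c • a + d • b →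
    S ≤ c + d

theorem IsMinimalApex.fst_le_one (hU : IsMinimalApex S y U) (hz : z ∈ U ∪ -U) : z.1 ≤ 1 := by
  by_contra! hz1
  have hSpos : 0 < S := by linarith [hU.mul_lt 1 (Or.inl rfl), hU.mul_lt (-1) (Or.inr rfl)]
  obtain ⟨σ, hσ, hside⟩ : ∃ σ : ℝ, (σ = 1 ∨ σ = -1) ∧ σ * (S * z.2 - y * z.1) ≤ 0 := by
    obtain h | h := le_total (S * z.2 - y * z.1) 0
    · exact ⟨1, Or.inl rfl, by linarith⟩
    · exact ⟨-1, Or.inr rfl, by linarith⟩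
  have hσσ : σ * σ = 1 := mul_self_eq_one_iff.2 hσ
  have hσy := hU.mul_lt σ hσ
  have hdenom : 0 < z.1 - σ * z.2 := by
    have : 0 < S * (z.1 - σ * z.2) := by nlinarith
    exact pos_of_mul_pos_right this hSpos.le
  have hle := hU.le_add (1, σ) (hU.one_mk_mem σ hσ) z hz
    (-(σ * (S * z.2 - y * z.1)) / (z.1 - σ * z.2)) ((S - σ * y) / (z.1 - σ * z.2))
    (div_nonneg (by linarith) hdenom.le) (div_nonneg (by linarith) hdenom.le) (by
      ext
      · simp only [Prod.fst_add, Prod.smul_fst, smul_eq_mul]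
        field_simp
        ring
      · simp only [Prod.snd_add, Prod.smul_snd, smul_eq_mul]
        field_simp
        linear_combination (S * z.2 - y * z.1) * hσσ)
  rw [← add_div, le_div_iff₀ hdenom] at hle
  nlinarith

theorem IsMinimalApex.one_lt (hU : IsMinimalApex S y U) (hapex : (S, y) ∉ absConvexHull ℝ U) :
    1 < S := by
  by_contra! hS
  have hpos := hU.mul_lt 1 (Or.inl rfl)
  have hneg := hU.mul_lt (-1) (Or.inr rfl)
  have hcomb : (S, y) = ((S + y) / 2) • ((1, 1) : ℝ × ℝ) + ((S - y) / 2) • (1, -1) := by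
    ext <;> simp <;> ring
  rw [hcomb] at hapex
  refine hapex (smul_add_smul_mem_of_absConvex absConvex_absConvexHull
    (mem_absConvexHull_of_mem_union_neg (hU.one_mk_mem 1 (Or.inl rfl)))
    (mem_absConvexHull_of_mem_union_neg (hU.one_mk_mem (-1) (Or.inr rfl))) ?_)
  rw [abs_of_nonneg (by linarith), abs_of_nonneg (by linarith)]
  linarith

theorem one_mk_mem_of_notMem_apexCone (hσ : σ = 1 ∨ σ = -1) (hS : 1 < S) {s : Set (ℝ × ℝ)}
    (hs : AbsConvex ℝ s) (hapex : (S, y) ∈ s) (hz : z ∈ s) (hz1 : z.1 ≤ 1) (hσy : σ * y < S)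
    (hside : S - z.1 < σ * ((S - 1) * z.2 - y * (z.1 - 1))) : (1, σ) ∈ s := by
  have hσσ : σ * σ = 1 := mul_self_eq_one_iff.2 hσ
  have hle : z.1 ≤ σ * z.2 := by
    by_contra! hlt
    nlinarith [mul_nonneg (sub_nonneg.2 hS.le) (sub_nonneg.2 hlt.le),
      mul_nonneg (sub_nonneg.2 hσy.le) (sub_nonneg.2 hz1)]
  have hdenom : (σ * z.2 - z.1) + (S - σ * y) < σ * (S * z.2 - y * z.1) := by linarith
  have hpos : 0 < σ * (S * z.2 - y * z.1) := by linarith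
  have hcomb : ((1, σ) : ℝ × ℝ) =
      ((σ * z.2 - z.1) / (σ * (S * z.2 - y * z.1))) • (S, y) +
        ((S - σ * y) / (σ * (S * z.2 - y * z.1))) • z := by
    ext
    · simp only [Prod.fst_add, Prod.smul_fst, smul_eq_mul]
      rw [div_mul_eq_mul_div, div_mul_eq_mul_div, ← add_div, eq_div_iff hpos.ne']
      ring
    · simp only [Prod.snd_add, Prod.smul_snd, smul_eq_mul]
      rw [div_mul_eq_mul_div, div_mul_eq_mul_div, ← add_div, eq_div_iff hpos.ne']
      linear_combination (S * z.2 - y * z.1) * hσσ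
  rw [hcomb]
  refine smul_add_smul_mem_of_absConvex hs hapex hz ?_
  rw [abs_of_nonneg (div_nonneg (by linarith) hpos.le),
    abs_of_nonneg (div_nonneg (by linarith) hpos.le), ← add_div, div_le_one hpos]
  exact hdenom.le

theorem IsMinimalApex.mem_apexCone (hU : IsMinimalApex S y U) (hS : 1 < S)
    (hX : IsIrredundant (insert (S, y) U)) (hz : z ∈ U ∪ -U) : z ∈ apexCone S y := by
  have hmono : U ∪ -U ⊆ insert (S, y) U ∪ -insert (S, y) U :=
    union_subset_union (subset_insert _ _) (neg_subset_neg.2 (subset_insert _ _))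
  by_contra hzcone
  obtain ⟨σ, hσ, hside⟩ : ∃ σ : ℝ, (σ = 1 ∨ σ = -1) ∧
      S - z.1 < σ * ((S - 1) * z.2 - y * (z.1 - 1)) := by
    simp only [apexCone, mem_ofPred_eq, not_le] at hzcone
    obtain h | h := lt_abs.1 hzcone
    · exact ⟨1, Or.inl rfl, by linarith⟩
    · exact ⟨-1, Or.inr rfl, by linarith⟩
  have hσσ : σ * σ = 1 := mul_self_eq_one_iff.2 hσ
  have hσy := hU.mul_lt σ hσ
  have hz₁ : z ≠ (1, σ) := by
    rintro rfl
    nlinarith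
  have hz₂ : z ≠ -(1, σ) := by
    rintro rfl
    simp only [Prod.fst_neg, Prod.snd_neg] at hside
    nlinarith
  refine hX.notMem_absConvexHull_diff_pair (hmono (hU.one_mk_mem σ hσ)) <|
    one_mk_mem_of_notMem_apexCone hσ hS absConvex_absConvexHull
      (mem_absConvexHull_diff_pair (Or.inl (mem_insert _ _)) (fun h => ?_) fun h => ?_)
      (mem_absConvexHull_diff_pair (hmono hz) hz₁ hz₂) (hU.fst_le_one hz) hσy hside
  · exact hS.ne' (congr_arg Prod.fst h)
  · have hS' : S = -1 := congr_arg Prod.fst h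
    linarith

theorem IsMinimalApex.subset_capRegion (hU : IsMinimalApex S y U) (hS : 1 < S)
    (hX : IsIrredundant (insert (S, y) U)) : U ⊆ capRegion S y := by
  intro z hz
  have hz' : z ∈ U ∪ -U := Or.inl hz
  have hz'' : -z ∈ U ∪ -U := Or.inr (by simpa using hz)
  refine ⟨abs_le.2 ⟨?_, hU.fst_le_one hz'⟩, hU.mem_apexCone hS hX hz', hU.mem_apexCone hS hX hz''⟩
  linarith [hU.fst_le_one hz'', Prod.fst_neg z]

theorem exists_isMinimalApex_coordinates {a b v : ℝ × ℝ} {c d : ℝ} (hv : v ∈ X)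
    (ha : a ∈ X \ {v} ∪ -(X \ {v})) (hb : b ∈ X \ {v} ∪ -(X \ {v})) (hab : planarDet a b ≠ 0)
    (hc : 0 < c) (hd : 0 < d) (hvab : v = c • a + d • b)
    (hmin : ∀ a' ∈ X \ {v} ∪ -(X \ {v}), ∀ b' ∈ X \ {v} ∪ -(X \ {v}), ∀ c' d' : ℝ, 0 ≤ c' →
      0 ≤ d' → v = c' • a' + d' • b' → c + d ≤ c' + d') :
    ∃ (L : (ℝ × ℝ) ≃L[ℝ] ℝ × ℝ) (S y : ℝ) (U : Set (ℝ × ℝ)),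
      IsMinimalApex S y U ∧ (S, y) ∉ U ∧ X = L '' insert (S, y) U := by
  obtain ⟨L, hL⟩ := exists_continuousLinearEquiv_apply_eq hab
  have hLv : L (c + d, c - d) = v := by
    rw [hL, hvab]
    congr 2 <;> ring
  have hmem (x : ℝ × ℝ) : x ∈ L ⁻¹' (X \ {v}) ∪ -(L ⁻¹' (X \ {v})) ↔
      L x ∈ X \ {v} ∪ -(X \ {v}) := by
    simp only [mem_union, mem_neg, mem_preimage, map_neg]
  refine ⟨L, c + d, c - d, L ⁻¹' (X \ {v}), ⟨?_, ?_, ?_⟩, by simp [hLv], ?_⟩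
  · rintro σ (rfl | rfl)
    · simpa [hmem, hL] using ha
    · norm_num [hmem, hL]
      simpa using hb
  · rintro σ (rfl | rfl) <;> linarith
  · intro a' ha' b' hb' c' d' hc' hd' hcomb
    refine hmin (L a') ((hmem a').1 ha') (L b') ((hmem b').1 hb') c' d' hc' hd' ?_
    rw [← hLv, hcomb, map_add, map_smul, map_smul]
  · rw [image_insert_eq, image_preimage_eq _ L.surjective, hLv, insert_sdiff_singleton,
      insert_eq_of_mem hv]

theorem IsIrredundant.exists_isMinimalApex (hX : IsIrredundant X) (hfin : X.Finite)
    (hcard : 2 < X.ncard) :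
    ∃ (L : (ℝ × ℝ) ≃L[ℝ] ℝ × ℝ) (S y : ℝ) (U : Set (ℝ × ℝ)),
      IsMinimalApex S y U ∧ (S, y) ∉ U ∧ X = L '' insert (S, y) U := by
  obtain ⟨v, u, w, hv, hu, hw, hvu, hvw, huw⟩ := (two_lt_ncard_iff hfin).1 hcard
  set Z := X \ {v} ∪ -(X \ {v}) with hZ
  have hZfin : Z.Finite := hfin.sdiff.union hfin.sdiff.neg
  have hZneg : ∀ z ∈ Z, -z ∈ Z := fun z hz => by simpa [hZ, or_comm] using hz
  have hvZ : ∀ z ∈ Z, planarDet v z ≠ 0 := by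
    rintro z (⟨hz, hzv⟩ | ⟨hz, hzv⟩)
    · exact hX.planarDet_ne_zero hv hz (Ne.symm hzv)
    · have hdet := hX.planarDet_ne_zero hv hz (Ne.symm hzv)
      contrapose! hdet
      simp only [planarDet, Prod.fst_neg, Prod.snd_neg] at hdet ⊢
      linarith
  obtain ⟨a, ha, b, hb, c, d, hc, hd, hvab, hmin⟩ := exists_min_nonneg_smul_add_smul hZfin hvZ
    (exists_nonneg_smul_add_smul hZneg (Or.inl ⟨hu, hvu.symm⟩) (Or.inl ⟨hw, hvw.symm⟩)
      (hX.planarDet_ne_zero hu hw huw) v)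
  have hcab : c * planarDet a b ≠ 0 := planarDet_smul_add_smul_right hvab ▸ hvZ b hb
  have hdba : d * planarDet b a ≠ 0 :=
    planarDet_smul_add_smul_right (hvab.trans (add_comm _ _)) ▸ hvZ a ha
  exact exists_isMinimalApex_coordinates hv ha hb (right_ne_zero_of_mul hcab)
    (hc.lt_of_ne' (left_ne_zero_of_mul hcab)) (hd.lt_of_ne' (left_ne_zero_of_mul hdba)) hvab hmin

theorem IsIrredundant.exists_symHullMoment_le {ι : Type*} [Fintype ι] {p : ℝ} (hp : 1 ≤ p)
    (hX : IsIrredundant X) (hfin : X.Finite) (hcard : 2 < X.ncard) :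
    ∃ Y : Set (ℝ × ℝ), Y.Finite ∧ Y.ncard < X.ncard ∧
      symHullMoment ι volume p (absConvexHull ℝ X) ≤
        symHullMoment ι volume p (absConvexHull ℝ Y) := by
  obtain ⟨L, S, y, U, hU, hapex, rfl⟩ := hX.exists_isMinimalApex hfin hcard
  have hX' : IsIrredundant (insert (S, y) U) :=
    IsIrredundant.of_image (f := (L : ℝ × ℝ →ₗ[ℝ] ℝ × ℝ)) L.injective hX
  have hapex' : (S, y) ∉ absConvexHull ℝ U := by
    simpa [insert_sdiff_self_of_notMem hapex] using hX' (S, y) (mem_insert _ _)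
  have hS := hU.one_lt hapex'
  have hUfin : U.Finite := (hfin.of_finite_image L.injective.injOn).subset (subset_insert _ _)
  obtain ⟨Y, hY, hYcard, hle⟩ := symHullMoment_absConvexHull_insert_apex_le (ι := ι) hp hS hUfin
    (hU.subset_capRegion hS hX') hU.one_mk_mem
  refine ⟨Y, hY, by rwa [ncard_image_of_injective _ L.injective], ?_⟩
  rwa [symHullMoment_absConvexHull_image volume volume L]

end Reduction

section Parallelogram

theorem measure_absConvexHull_eq_zero_of_ncard_lt {V : Type*} [NormedAddCommGroup V]
    [NormedSpace ℝ V] [FiniteDimensional ℝ V] [MeasurableSpace V] [BorelSpace V] (μ : Measure V)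
    [μ.IsAddHaarMeasure] {X : Set V} (hX : X.Finite) (hcard : X.ncard < Module.finrank ℝ V) :
    μ (absConvexHull ℝ X) = 0 := by
  have hspan : Submodule.span ℝ X ≠ ⊤ := by
    intro htop
    have : Fintype X := hX.fintype
    have hle := finrank_span_le_card (R := ℝ) X
    rw [htop, finrank_top, ← ncard_eq_toFinset_card'] at hle
    exact hle.not_gt hcard
  refine measure_mono_null (absConvexHull_min Submodule.subset_span ⟨?_, Submodule.convex _⟩)
    (Measure.addHaar_submodule μ _ hspan)
  exact balanced_iff_smul_mem.2 fun _ _ _ hx => Submodule.smul_mem _ _ hx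

theorem exists_continuousLinearEquiv_image_eq_pair {a b : ℝ × ℝ} (h : planarDet a b ≠ 0) :
    ∃ L : (ℝ × ℝ) ≃L[ℝ] ℝ × ℝ, L '' {(1, 1), (1, -1)} = {a, b} := by
  obtain ⟨L, hL⟩ := exists_continuousLinearEquiv_apply_eq h
  exact ⟨L, by simp [image_pair, hL]⟩

theorem symHullMoment_absConvexHull_le_of_finite {ι : Type*} [Fintype ι] [Nonempty ι] {p : ℝ}
    (hp : 1 ≤ p) {X : Set (ℝ × ℝ)} (hX : X.Finite) :
    symHullMoment ι volume p (absConvexHull ℝ X) ≤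
      symHullMoment ι volume p (absConvexHull ℝ {((1, 1) : ℝ × ℝ), (1, -1)}) := by
  induction hn : X.ncard using Nat.strong_induction_on generalizing X with
  | _ n ih =>
  subst hn
  by_cases hirr : IsIrredundant X
  · obtain hcard | hcard | hcard := lt_trichotomy X.ncard 2
    · have hnull : volume (absConvexHull ℝ X) = 0 :=
        measure_absConvexHull_eq_zero_of_ncard_lt volume hX (by simpa using hcard)
      rw [symHullMoment_of_measure_eq_zero hnull]
      exact symHullMoment_nonneg _ _ _
    · obtain ⟨a, b, hab, rfl⟩ := ncard_eq_two.1 hcard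
      obtain ⟨L, hL⟩ := exists_continuousLinearEquiv_image_eq_pair
        (hirr.planarDet_ne_zero (by simp) (by simp) hab)
      rw [← hL, symHullMoment_absConvexHull_image volume volume]
    · obtain ⟨Y, hY, hYX, hle⟩ := hirr.exists_symHullMoment_le (ι := ι) hp hX hcard
      exact hle.trans (ih _ hYX hY rfl)
  · obtain ⟨x, hx, hmem⟩ : ∃ x ∈ X, x ∈ absConvexHull ℝ (X \ {x}) := by
      simpa [IsIrredundant] using hirr
    rw [← absConvexHull_diff_singleton_of_mem hmem]
    exact ih _ (ncard_sdiff_singleton_lt_of_mem hx hX) hX.sdiff rfl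

theorem absConvexHull_pair_eq_square :
    absConvexHull ℝ {((1, 1) : ℝ × ℝ), (1, -1)} = Icc (-1) 1 ×ˢ Icc (-1) 1 := by
  refine (absConvexHull_min ?_ ⟨?_, (convex_Icc _ _).prod (convex_Icc _ _)⟩).antisymm ?_
  · simp [insert_subset_iff]
  · refine (balanced_iff_neg_mem ((convex_Icc _ _).prod (convex_Icc _ _))).2 ?_
    rintro ⟨x, y⟩ ⟨⟨hx, hx'⟩, hy, hy'⟩
    exact ⟨⟨neg_le_neg hx', neg_le.1 hx⟩, neg_le_neg hy', neg_le.1 hy⟩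
  · rintro ⟨x, y⟩ ⟨⟨hx, hx'⟩, hy, hy'⟩
    have hcomb : ((x, y) : ℝ × ℝ) =
        ((x + y) / 2) • ((1, 1) : ℝ × ℝ) + ((x - y) / 2) • ((1, -1) : ℝ × ℝ) := by
      ext <;> simp <;> ring
    rw [hcomb]
    refine smul_add_smul_mem_of_absConvex absConvex_absConvexHull
      (subset_absConvexHull (by simp)) (subset_absConvexHull (by simp)) ?_
    have habs : |x + y| + |x - y| ≤ 2 := by
      cases abs_cases (x + y) <;> cases abs_cases (x - y) <;> linarith
    simp only [abs_div, abs_two]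
    linarith

/-- The standard coordinates on the Euclidean plane, valued in the product `ℝ × ℝ`. -/
def euclideanPlaneEquivProd : EuclideanSpace ℝ (Fin 2) ≃L[ℝ] ℝ × ℝ :=
  (EuclideanSpace.equiv (Fin 2) ℝ).trans (ContinuousLinearEquiv.finTwoArrow ℝ ℝ)

theorem euclideanPlaneEquivProd_image_square :
    euclideanPlaneEquivProd '' {x | ∀ i, x i ∈ Icc (-1 : ℝ) 1} = Icc (-1) 1 ×ˢ Icc (-1) 1 := by
  ext z
  rw [ContinuousLinearEquiv.image_eq_preimage_symm, mem_preimage, mem_ofPred_eq,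
    Fin.forall_fin_two, mem_prod]
  rfl

theorem IsSymConvexBody.absConvex {K : Set E} (hK : IsSymConvexBody K) : AbsConvex ℝ K := by
  obtain ⟨-, hconv, -, hsymm⟩ := hK
  refine ⟨(balanced_iff_neg_mem hconv).2 fun x hx => ?_, hconv⟩
  rwa [hsymm] at hx

end Parallelogram

/-- For every symmetric convex body `K ⊆ ℝ²`, real `p ≥ 1` and integer `N ≥ 2`,
`𝔼 V_{K, N}^p ≤ 𝔼 V_{𝒫, N}^p`, where `𝒫` is any symmetric parallelogram
(the image of `[-1,1]²` under an invertible linear map). -/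
theorem momentV_le_parallelogram
    (K : Set (EuclideanSpace ℝ (Fin 2))) (hK : IsSymConvexBody K)
    (p : ℝ) (hp : 1 ≤ p) (N : ℕ) (hN : 2 ≤ N)
    (L : EuclideanSpace ℝ (Fin 2) ≃ₗ[ℝ] EuclideanSpace ℝ (Fin 2))
    (P : Set (EuclideanSpace ℝ (Fin 2)))
    (hP : P = L '' {x | ∀ i, x i ∈ Set.Icc (-1 : ℝ) 1}) :
    momentV 2 N K p ≤ momentV 2 N P p := by
  have : NeZero N := ⟨by omega⟩
  have hsquare : momentV 2 N P p =
      symHullMoment (Fin N) volume p (absConvexHull ℝ {((1, 1) : ℝ × ℝ), (1, -1)}) := by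
    rw [momentV_eq_symHullMoment, hP, absConvexHull_pair_eq_square,
      ← euclideanPlaneEquivProd_image_square, symHullMoment_image volume volume]
    exact symHullMoment_image volume volume L.toContinuousLinearEquiv p _
  rw [hsquare, momentV_eq_symHullMoment]
  refine symHullMoment_le_of_forall_finite volume hK.1 hK.absConvex
    (Measure.measure_pos_of_nonempty_interior _ hK.2.2.1).ne' (zero_le_one.trans hp) fun X hX => ?_
  rw [← symHullMoment_absConvexHull_image volume volume euclideanPlaneEquivProd]
  exact symHullMoment_absConvexHull_le_of_finite hp (hX.image _)
end
end
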